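/- Let L/ℚ be an abelian Galois extension with [L:ℚ] = 2M² for a positive integer M > 1. Then the root discriminant satisfies rd_L > exp((1/4)·log([L:ℚ]/2)) = ([L:ℚ]/2)^{1/4}. -/

import Mathlib

open NumberField

namespace Ab

section A
variable {B G : Type*} [CommRing B] [Group G] [MulSemiringAction G B] {P : Ideal B}

open Finset

lemma A1 {i : ℕ} {s : G} (hs : s ∈ (P ^ (i + 1)).inertia G) (k : ℕ) :
    ∀ y ∈ P ^ k, s • y - y ∈ P ^ (k + i) := by
  have h0 : ∀ y, s • y - y ∈ P ^ (i + 1) := hs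
  induction k with
  | zero => intro y _; exact Ideal.pow_le_pow_right (by omega) (h0 y)
  | succ k ih =>
    intro y hy
    rw [pow_succ] at hy
    refine Submodule.mul_induction_on hy ?_ ?_
    · intro b hb a ha
      have e : s • (b * a) - b * a = (s • b) * (s • a - a) + (s • b - b) * a := by
        rw [smul_mul']; ring
      rw [e]
      have hsb : s • b ∈ P ^ k := by
        have := add_mem (Ideal.pow_le_pow_right (Nat.le_add_right k i) (ih b hb)) hb
        simpa using this
      refine add_mem ?_ ?_
      · have := Ideal.mul_mem_mul hsb (h0 a)
        rw [← pow_add] at this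
        convert this using 2; ring
      · have := Ideal.mul_mem_mul (ih b hb) ha
        rw [← pow_succ] at this
        convert this using 2; ring
    · intro x y hx hy
      have := add_mem hx hy
      rw [smul_add]
      convert this using 1; ring

/-- the operator s - 1 -/
noncomputable def Nop (B : Type*) {G : Type*} [CommRing B] [Group G] [MulSemiringAction G B] (s : G) :
    Module.End ℤ B := DistribMulAction.toModuleEnd ℤ B s - 1

lemma Nop_apply (s : G) (y : B) : Nop B s y = s • y - y := rfl

lemma Nop_pow {i : ℕ} {s : G} (hs : s ∈ (P ^ (i + 1)).inertia G) (j k : ℕ) (y : B) (hy : y ∈ P ^ k) :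
    (Nop B s ^ j) y ∈ P ^ (k + j * i) := by
  induction j with
  | zero => simpa using hy
  | succ j ih =>
    rw [pow_succ', Module.End.mul_apply, Nop_apply]
    have := A1 hs _ _ ih
    convert this using 2; ring

lemma geom (s : G) (p : ℕ) (y : B) :
    ∑ j ∈ range p, (s ^ j) • y = ∑ j ∈ range p, (p.choose (j + 1) : B) * (Nop B s ^ j) y := by
  have h := Polynomial.geom_sum_X_comp_X_add_one_eq_sum (R := ℤ) p
  have h2 := congrArg (fun f => (Polynomial.aeval (Nop B s) f) y) h
  simp only [Polynomial.aeval_comp, map_add, map_sum, map_pow, Polynomial.aeval_X, map_one, map_mul,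
    map_natCast] at h2
  have hT : Nop B s + 1 = DistribMulAction.toModuleEnd ℤ B s := sub_add_cancel _ _
  rw [hT] at h2
  simp only [← map_pow] at h2
  rw [LinearMap.sum_apply, LinearMap.sum_apply] at h2
  refine Eq.trans ?_ (h2.trans ?_)
  · rfl
  · refine sum_congr rfl fun j _ => ?_
    rw [Module.End.mul_apply, Module.End.natCast_apply, nsmul_eq_mul]

lemma geom_mem {i e p : ℕ} (hp : p.Prime) (hpe : (p : B) ∈ P ^ e) {s : G}
    (hs : s ∈ (P ^ (i + 1)).inertia G) {k w : ℕ} (y : B) (hy : y ∈ P ^ k)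
    (h1 : w ≤ k + (p - 1) * i) (h2 : w ≤ k + e) : ∑ j ∈ range p, (s ^ j) • y ∈ P ^ w := by
  rw [geom]
  refine sum_mem fun j hj => ?_
  rw [mem_range] at hj
  have hN := Nop_pow hs j k y hy
  by_cases hjp : j + 1 = p
  · subst hjp
    refine Ideal.pow_le_pow_right ?_ (Ideal.mul_mem_left _ _ hN)
    simpa using h1
  · obtain ⟨c, hc⟩ := hp.dvd_choose_self (k := j + 1) (by omega) (by omega)
    rw [hc]; push_cast
    have := Ideal.mul_mem_mul hpe (Ideal.mul_mem_left _ (c : B) hN)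
    rw [← pow_add] at this
    refine Ideal.pow_le_pow_right ?_ (by rw [mul_assoc]; exact this)
    omega

lemma A3 {i e p j : ℕ} (hp : p.Prime) (hpe : (p : B) ∈ P ^ e) {s : G}
    (hs : s ∈ (P ^ (i + 1)).inertia G) (h1 : j ≤ p * i) (h2 : j ≤ i + e) :
    s ^ p ∈ (P ^ (j + 1)).inertia G := by
  intro y
  have hpp := hp.one_lt
  have h := geom_mem hp hpe hs (k := i + 1) (w := j + 1) (s • y - y) (hs y)
    (by obtain ⟨q, rfl⟩ : ∃ q, p = q + 1 := ⟨p - 1, by omega⟩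
        simp; nlinarith) (by omega)
  have e : ∑ j ∈ range p, (s ^ j) • (s • y - y) = s ^ p • y - y := by
    have : ∀ j, (s ^ j) • (s • y - y) = s ^ (j+1) • y - s ^ j • y := by
      intro j; rw [smul_sub, smul_smul, pow_succ]
    simp only [this]
    rw [Finset.sum_range_sub (fun j => s ^ j • y)]; simp
  rw [e] at h; exact h

lemma A5 {i e p : ℕ} (hp : p.Prime) (hpe : (p : B) ∈ P ^ e)
    (hpe' : ∀ a z, (p : B) * z ∈ P ^ (a + e + 1) → z ∈ P ^ (a + 1))
    {s : G} (hs : s ∈ (P ^ (i + 1)).inertia G) (hi : 1 ≤ i) (hlt : e < (p - 1) * i)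
    (hsp : s ^ p = 1) (y : B) : ∀ a, s • y - y ∈ P ^ a := by
  intro a
  induction a with
  | zero => simp
  | succ a ih =>
    apply hpe' a
    have h0 : ∑ j ∈ range p, (s ^ j) • (s • y - y) = 0 := by
      have : ∀ j, (s ^ j) • (s • y - y) = s ^ (j+1) • y - s ^ j • y := by
        intro j; rw [smul_sub, smul_smul, pow_succ]
      simp only [this]
      rw [Finset.sum_range_sub (fun j => s ^ j • y)]; simp [hsp]
    rw [geom] at h0
    obtain ⟨q, rfl⟩ : ∃ q, p = q + 1 := ⟨p - 1, by have := hp.one_lt; omega⟩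
    rw [sum_range_succ'] at h0
    simp only [zero_add, Nat.choose_one_right, pow_zero, Module.End.one_apply] at h0
    rw [← eq_neg_iff_add_eq_zero] at h0
    have : ((q+1 : ℕ) : B) * (s • y - y) = - ∑ j ∈ range q, ((q+1).choose (j + 1 + 1) : B) * (Nop B s ^ (j+1)) (s • y - y) := by
      rw [h0]; ring
    rw [this]
    refine neg_mem (sum_mem fun j hj => ?_)
    rw [mem_range] at hj
    have hN := Nop_pow hs (j+1) a _ ih
    by_cases hjp : j + 1 = q
    · subst hjp
      refine Ideal.pow_le_pow_right ?_ (Ideal.mul_mem_left _ _ hN)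
      simp at hlt; omega
    · obtain ⟨c, hc⟩ := hp.dvd_choose_self (k := j + 1 + 1) (by omega) (by omega)
      rw [hc]; push_cast
      have := Ideal.mul_mem_mul hpe (Ideal.mul_mem_left _ (c : B) hN)
      rw [← pow_add] at this
      refine Ideal.pow_le_pow_right ?_ (by rw [mul_assoc]; push_cast at this; exact this)
      nlinarith
end A
end Ab


namespace Ab

section B
variable {B G : Type*} [CommRing B] [IsDedekindDomain B] [Group G] [MulSemiringAction G B] {P : Ideal B}

open Finset Polynomial
open scoped Pointwise

lemma valmul [hP : P.IsPrime] (h0 : P ≠ ⊥) {i j : ℕ} {a b : B} (h : a * b ∈ P ^ (i + j + 1)) :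
    a ∈ P ^ (i + 1) ∨ b ∈ P ^ (j + 1) := by
  have hpr : Prime P := Ideal.prime_of_isPrime h0 hP
  by_contra! hc
  rw [← Ideal.dvd_span_singleton, ← Ideal.dvd_span_singleton, ← emultiplicity_lt_iff_not_dvd,
    ← emultiplicity_lt_iff_not_dvd] at hc
  rw [← Ideal.dvd_span_singleton, ← Ideal.span_singleton_mul_span_singleton, pow_dvd_iff_le_emultiplicity,
    emultiplicity_mul hpr] at h
  obtain ⟨h1, h2⟩ := hc
  obtain ⟨u, hu⟩ := ENat.ne_top_iff_exists.mp h1.ne_top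
  obtain ⟨w, hw⟩ := ENat.ne_top_iff_exists.mp h2.ne_top
  rw [← hu] at h1 h; rw [← hw] at h2 h
  norm_cast at h1 h2 h
  omega

lemma valcancel [hP : P.IsPrime] (h0 : P ≠ ⊥) {k : ℕ} {a b : B} (ha : a ∉ P) (h : a * b ∈ P ^ k) :
    b ∈ P ^ k := by
  cases k with
  | zero => simp
  | succ j =>
    rcases valmul h0 (i := 0) (j := j) (by simpa using h) with h | h
    · simp at h; exact absurd h ha
    · exact h

/-- local monogenicity -/
def Mono (G : Type*) {B : Type*} [CommRing B] [Group G] [MulSemiringAction G B] (P : Ideal B) (x : B) :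
    Prop := ∀ y : B, ∃ m, m ∉ P ∧ ∃ g : B[X], (∀ s ∈ P.inertia G, s • m = m ∧
      g.map (MulSemiringAction.toRingHom G B s) = g) ∧ m * y = g.eval x

omit [IsDedekindDomain B] in
lemma eval_smul_aux (s : G) (g : B[X]) (x : B) (hg : g.map (MulSemiringAction.toRingHom G B s) = g) :
    s • (g.eval x) = g.eval (s • x) := by
  have := Polynomial.eval_map_apply (f := MulSemiringAction.toRingHom G B s) (p := g) x
  rw [hg] at this
  exact this.symm

lemma B1 [hP : P.IsPrime] (h0 : P ≠ ⊥) {x : B} (hM : Mono G P x) {s : G} (hs : s ∈ P.inertia G) {k : ℕ}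
    (h : s • x - x ∈ P ^ k) : s ∈ (P ^ k).inertia G := by
  intro y
  obtain ⟨m, hm, g, hg, e⟩ := hM y
  obtain ⟨h1, h2⟩ := hg s hs
  apply valcancel h0 hm
  have : m * (s • y - y) = g.eval (s • x) - g.eval x := by
    rw [← eval_smul_aux s g x h2, ← e, smul_mul', h1]; ring
  rw [this]
  exact Ideal.mem_of_dvd _ (Polynomial.sub_dvd_eval_sub _ _ _) h

lemma B2 [hP : P.IsPrime] (h0 : P ≠ ⊥) {x : B} (hM : Mono G P x) (H : Subgroup G) [Fintype H]
    (hH : H ≤ P.inertia G) (hinj : ∀ h ∈ H, ∀ h' ∈ H, h • x = h' • x → h = h') {σ : G}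
    (hσ : σ ∈ P.inertia G) {y : B} (hy : ∀ h ∈ H, h • y = y) (a : H → ℕ)
    (ha : ∀ h : H, (σ * h) • x - x ∈ P ^ (a h)) : σ • y - y ∈ P ^ (∑ h, a h) := by
  obtain ⟨m, hm, g, hg, e⟩ := hM y
  apply valcancel h0 hm
  have hdvd : ∏ h : H, (X - C ((h : G) • x)) ∣ g - C (m * y) := by
    by_cases hz : g - C (m * y) = 0
    · rw [hz]; exact dvd_zero _
    have := (Multiset.prod_X_sub_C_dvd_iff_le_roots hz
      ((Finset.univ : Finset H).val.map (fun h : H => (h : G) • x))).mpr ?_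
    · rw [Multiset.map_map] at this; exact this
    · rw [Multiset.le_iff_subset]
      · intro r hr
        rw [Multiset.mem_map] at hr
        obtain ⟨h, -, rfl⟩ := hr
        rw [mem_roots hz, IsRoot.def, eval_sub, eval_C, ← eval_smul_aux _ g x (hg h (hH h.2)).2, ← e,
          smul_mul', (hg h (hH h.2)).1, hy h h.2, sub_self]
      · apply Multiset.Nodup.map _ (Finset.univ.nodup)
        intro h h' hh
        exact Subtype.ext (hinj h h.2 h' h'.2 hh)
  obtain ⟨Q, hQ⟩ := hdvd
  have h2 := congrArg (fun f => (f.map (MulSemiringAction.toRingHom G B σ)).eval x) hQ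
  simp only [Polynomial.map_sub, Polynomial.map_mul, Polynomial.map_prod, (hg σ hσ).2, map_X, map_C,
    eval_sub, eval_mul, eval_prod, eval_X, eval_C, MulSemiringAction.toRingHom_apply] at h2
  rw [← e, smul_mul', (hg σ hσ).1] at h2
  have h3 : m * (σ • y - y) = (∏ h : H, (x - σ • (h : G) • x)) * (- (eval x (Q.map (MulSemiringAction.toRingHom G B σ)))) := by
    rw [mul_neg, ← h2]; ring
  rw [h3]
  apply Ideal.mul_mem_right
  rw [← Finset.prod_pow_eq_pow_sum]
  refine Ideal.prod_mem_prod fun h _ => ?_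
  have := neg_mem (ha h)
  rw [neg_sub, mul_smul] at this
  exact this

omit [IsDedekindDomain B] in
lemma smul_pow_mem {i : ℕ} {s : G} (hs : s ∈ (P ^ (i + 1)).inertia G) {k : ℕ} {y : B} (hy : y ∈ P ^ k) :
    s • y ∈ P ^ k := by
  have := add_mem (Ideal.pow_le_pow_right (Nat.le_add_right k i) (A1 hs k y hy)) hy
  simpa using this

omit [IsDedekindDomain B] in
lemma stab_pow_mem {t : G} (ht : t ∈ MulAction.stabilizer G P) {k : ℕ} {y : B} (hy : y ∈ P ^ k) :
    t • y ∈ P ^ k := by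
  have h1 : t • P = P := ht
  have h2 : t • (P ^ k) = P ^ k := by
    rw [Ideal.pointwise_smul_def, Ideal.map_pow, ← Ideal.pointwise_smul_def, h1]
  rw [← h2]
  exact Ideal.smul_mem_pointwise_smul _ _ _ hy

omit [IsDedekindDomain B] in
lemma inertia_anti {i j : ℕ} (h : i ≤ j) : (P ^ j).inertia G ≤ (P ^ i).inertia G :=
  fun _ hs y => Ideal.pow_le_pow_right h (hs y)

lemma exists_scale [hP : P.IsPrime] (h0 : P ≠ ⊥) {i : ℕ} {z z' : B} (hz : z ∈ P ^ i)
    (hzn : z ∉ P ^ (i + 1)) (hz' : z' ∈ P ^ i) : ∃ c, z' - c * z ∈ P ^ (i + 1) := by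
  obtain ⟨d, e, he, h⟩ := Ideal.exists_mul_add_mem_pow_succ h0 z z' hz hzn hz'
  exact ⟨d, by rw [← h]; convert he using 1; ring⟩

lemma exists_ratio [hP : P.IsPrime] (h0 : P ≠ ⊥)
    (hres : ∀ c : B, (∀ t ∈ MulAction.stabilizer G P, t • c - c ∈ P) → ∃ m : ℕ, c - (m : B) ∈ P)
    {i : ℕ} {z z' : B} (hz : z ∈ P ^ i)
    (hzn : z ∉ P ^ (i + 1)) (hz' : z' ∈ P ^ i)
    (hcomp : ∀ t ∈ MulAction.stabilizer G P, ∃ u, u ∉ P ∧ t • z - u * z ∈ P ^ (i + 1) ∧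
      t • z' - u * z' ∈ P ^ (i + 1)) : ∃ m : ℕ, z' - (m : B) * z ∈ P ^ (i + 1) := by
  obtain ⟨c, hc⟩ := exists_scale h0 hz hzn hz'
  obtain ⟨m, hm⟩ := hres c (by
    intro t ht
    obtain ⟨u, hu, h1, h2⟩ := hcomp t ht
    have h3 := stab_pow_mem ht hc
    rw [smul_sub, smul_mul'] at h3
    have h4 : (u * (t • c - c)) * z ∈ P ^ (i + 0 + 1) := by
      have e : (u * (t • c - c)) * z = (t • z' - u * z') - (t • z' - t • c * t • z) + u * (z' - c * z)
          - (t • c) * (t • z - u * z) := by ring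
      rw [e]
      exact sub_mem (add_mem (sub_mem h2 h3) (Ideal.mul_mem_left _ _ hc)) (Ideal.mul_mem_left _ _ h1)
    rcases valmul h0 (i := 0) (j := i) (by simpa using h4) with h | h
    · rw [zero_add, pow_one] at h
      exact (hP.mem_or_mem h).resolve_left hu
    · exact absurd h hzn)
  refine ⟨m, ?_⟩
  have h1 := Ideal.mul_mem_mul hm hz
  rw [← pow_succ'] at h1
  have := add_mem hc h1
  convert this using 1
  ring

end B
end Ab


namespace Ab

section C
set_option linter.unusedSectionVars false
variable {B G : Type*} [CommRing B] [IsDedekindDomain B] [Group G] [MulSemiringAction G B] {P : Ideal B}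
variable {x : B} {p e : ℕ}
open Finset Polynomial
open scoped Pointwise

/-- local data package -/
structure Loc (G : Type*) {B : Type*} [CommRing B] [Group G] [MulSemiringAction G B] (P : Ideal B)
    (x : B) (p e : ℕ) : Prop where
  prime : P.IsPrime
  h0 : P ≠ ⊥
  hx : x ∈ P
  hx2 : x ∉ P ^ 2
  mono : Mono G P x
  hres : ∀ c : B, (∀ t ∈ MulAction.stabilizer G P, t • c - c ∈ P) → ∃ m : ℕ, c - (m : B) ∈ P
  hab : ∀ σ τ : G, σ * τ = τ * σ
  hp : p.Prime
  hpe : (p : B) ∈ P ^ e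
  hpe' : ∀ (a : ℕ) (z : B), (p : B) * z ∈ P ^ (a + e + 1) → z ∈ P ^ (a + 1)
  faith : ∀ s : G, (∀ y : B, s • y = y) → s = 1
  card : Nat.card (P.inertia G) = e
  he : 0 < e

lemma xpow_not (D : Loc G P x p e) (k : ℕ) : x ^ k ∉ P ^ (k + 1) := by
  have := D.prime
  induction k with
  | zero => simpa using D.prime.one_notMem
  | succ k ih =>
    intro h
    rw [pow_succ x k] at h
    rcases valmul D.h0 (i := k) (j := 1) h with h | h
    · exact ih h
    · exact D.hx2 h

lemma xpow (D : Loc G P x p e) (k : ℕ) : x ^ k ∈ P ^ k := Ideal.pow_mem_pow D.hx k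

lemma inertia_le {k : ℕ} (hk : 1 ≤ k) : (P ^ k).inertia G ≤ P.inertia G := by
  have := inertia_anti (P := P) (G := G) hk
  rwa [pow_one] at this

lemma comm_smul (D : Loc G P x p e) (s t : G) (y : B) : s • t • y = t • s • y := by
  rw [← mul_smul, D.hab, mul_smul]

lemma tscale (D : Loc G P x p e) {t : G} (ht : t ∈ MulAction.stabilizer G P) :
    ∃ u, u ∉ P ∧ t • x - u * x ∈ P ^ 2 := by
  have := D.prime
  have h1 := stab_pow_mem ht (k := 1) (y := x) (by simpa using D.hx)
  obtain ⟨u, hu⟩ := exists_scale D.h0 (i := 1) (z := x) (z' := t • x) (by simpa using D.hx) D.hx2 h1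
  refine ⟨u, fun h => ?_, hu⟩
  have h2 : u * x ∈ P ^ 2 := by rw [pow_two]; exact Ideal.mul_mem_mul h D.hx
  have h3 : t • x ∈ P ^ 2 := by simpa using add_mem hu h2
  have h4 := stab_pow_mem (inv_mem ht) h3
  rw [inv_smul_smul] at h4
  exact D.hx2 h4

lemma tcomp (D : Loc G P x p e) {t : G} {u : B} (htu : t • x - u * x ∈ P ^ 2)
    {i : ℕ} {s : G} (hs : s ∈ (P ^ (i + 1)).inertia G) :
    t • (s • x - x) - u * (s • x - x) ∈ P ^ (i + 2) := by
  have h1 := A1 hs 2 _ htu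
  have h2 : (s • u - u) * (s • x) ∈ P ^ (i + 1 + 1) := by
    rw [pow_succ]
    refine Ideal.mul_mem_mul (hs u) ?_
    have := smul_pow_mem hs (k := 1) (y := x) (by simpa using D.hx)
    simpa using this
  have h3 := add_mem h2 (show _ ∈ P ^ (i + 1 + 1) by rw [show i + 1 + 1 = 2 + i by ring]; exact h1)
  convert h3 using 1
  rw [smul_sub, comm_smul D t s, smul_sub, smul_mul']
  ring

lemma powx {i : ℕ} (hi : 1 ≤ i) {s : G} (hs : s ∈ (P ^ (i + 1)).inertia G) (m : ℕ) (y : B) :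
    s ^ m • y - y - (m : B) * (s • y - y) ∈ P ^ (i + 2) := by
  induction m with
  | zero => simp
  | succ m ih =>
    have h1 : s ^ m • y - y ∈ P ^ (i + 1) := (pow_mem hs m) y
    have h2 := A1 hs _ _ h1
    have h3 := add_mem ih (Ideal.pow_le_pow_right (show i + 2 ≤ i + 1 + i by omega) h2)
    convert h3 using 1
    rw [pow_succ', mul_smul, smul_sub]
    push_cast
    ring

lemma B3 (D : Loc G P x p e) {i : ℕ} (hi : 1 ≤ i) {s s' : G} (hs : s ∈ (P ^ (i + 1)).inertia G)
    (hs' : s' ∈ (P ^ (i + 1)).inertia G) (hn : s ∉ (P ^ (i + 2)).inertia G) :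
    ∃ m : ℕ, s' * (s ^ m)⁻¹ ∈ (P ^ (i + 2)).inertia G := by
  have := D.prime
  have hn' : s • x - x ∉ P ^ (i + 1 + 1) := fun h =>
    hn (B1 D.h0 D.mono (inertia_le (by omega) hs) h)
  obtain ⟨m, hm⟩ := exists_ratio D.h0 D.hres (i := i + 1) (z := s • x - x) (z' := s' • x - x)
    (hs x) hn' (hs' x) (by
      intro t ht
      obtain ⟨u, hu, h⟩ := tscale D ht
      exact ⟨u, hu, tcomp D h hs, tcomp D h hs'⟩)
  refine ⟨m, B1 D.h0 D.mono (inertia_le (k := i + 1) (by omega)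
    (mul_mem hs' (inv_mem (pow_mem hs m)))) ?_⟩
  have h1 := sub_mem hm (powx hi hs m x)
  have h2 : s' • x - s ^ m • x ∈ P ^ (i + 2) := by
    convert h1 using 1; ring
  have h3 := smul_pow_mem (inv_mem (pow_mem hs m)) h2
  rw [smul_sub, inv_smul_smul] at h3
  rwa [D.hab, mul_smul]

lemma B4 (D : Loc G P x p e) {s : G} (hs : s ∈ P.inertia G) :
    ∃ m : ℕ, s • x - (m : B) * x ∈ P ^ 2 := by
  have := D.prime
  have hs1 : s ∈ (P ^ (0 + 1)).inertia G := by simpa using hs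
  have hsx : s • x ∈ P := by
    have := smul_pow_mem hs1 (k := 1) (y := x) (by simpa using D.hx)
    simpa using this
  refine exists_ratio D.h0 D.hres (i := 1) (z := x) (z' := s • x)
    (by simpa using D.hx) D.hx2 (by simpa using hsx) ?_
  intro t ht
  obtain ⟨u, hu, h⟩ := tscale D ht
  refine ⟨u, hu, h, ?_⟩
  have := add_mem (tcomp D h hs1) h
  convert this using 1
  rw [smul_sub]; ring

lemma B5 (D : Loc G P x p e) {s t : G} (hs : s ∈ (P ^ 2).inertia G) (hs' : s ∉ (P ^ 3).inertia G)
    (ht : t ∈ (P ^ 3).inertia G) : t ∈ (P ^ 4).inertia G := by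
  have := D.prime
  have hpw : ∀ {k l : ℕ} {z : B}, l ≤ k → z ∈ P ^ k → z ∈ P ^ l :=
    fun h hz => Ideal.pow_le_pow_right h hz
  have hmul : ∀ {k l m : ℕ} {z w : B}, m ≤ k + l → z ∈ P ^ k → w ∈ P ^ l → z * w ∈ P ^ m :=
    fun h hz hw => hpw h (by rw [pow_add]; exact Ideal.mul_mem_mul hz hw)
  apply B1 D.h0 D.mono (inertia_le (by omega) ht)
  obtain ⟨α, hα⟩ : ∃ α, s • x = x + α := ⟨s • x - x, by ring⟩
  obtain ⟨β, hβ⟩ : ∃ β, t • x = x + β := ⟨t • x - x, by ring⟩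
  have hα2 : α ∈ P ^ 2 := by have := hs x; rw [hα] at this; simpa using this
  have hβ3 : β ∈ P ^ 3 := by have := ht x; rw [hβ] at this; simpa using this
  have hα3 : α ∉ P ^ 3 := fun h => hs' (B1 D.h0 D.mono (inertia_le (by omega) hs) (by
    rw [hα]; simpa using h))
  rw [hβ, add_sub_cancel_left]
  obtain ⟨a, ha⟩ := exists_scale D.h0 (i := 2) (xpow D 2) (xpow_not D 2) hα2
  obtain ⟨b, hb⟩ := exists_scale D.h0 (i := 3) (xpow D 3) (xpow_not D 3) hβ3
  obtain ⟨r, hr⟩ : ∃ r, α = a * x ^ 2 + r := ⟨α - a * x ^ 2, by ring⟩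
  obtain ⟨r', hr'⟩ : ∃ r', β = b * x ^ 3 + r' := ⟨β - b * x ^ 3, by ring⟩
  have hrm : r ∈ P ^ 3 := by rw [hr] at ha; simpa using ha
  have hrm' : r' ∈ P ^ 4 := by rw [hr'] at hb; simpa using hb
  have hx1 : x ∈ P ^ 1 := by simpa using D.hx
  have key : s • β - β = t • α - α := by
    have e1 : s • t • x = t • s • x := comm_smul D s t x
    rw [hα, hβ, smul_add, smul_add, hα, hβ] at e1
    linear_combination e1
  have e2 : t • α - α = (t • a - a) * (t • (x ^ 2)) + (2 * a * (b * x ^ 4) + 2 * a * x * r' + a * β ^ 2) + (t • r - r) := by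
    have : t • α = t • a * t • (x ^ 2) + t • r := by rw [hr, smul_add, smul_mul']
    rw [this]
    have h2 : t • (x ^ 2) = x ^ 2 + 2 * x * β + β ^ 2 := by rw [smul_pow', hβ]; ring
    have h3 : a * (2 * x * β) = 2 * a * (b * x ^ 4) + 2 * a * x * r' := by rw [hr']; ring
    have h4 : a * t • (x ^ 2) = a * x ^ 2 + a * (2 * x * β) + a * β ^ 2 := by rw [h2]; ring
    linear_combination h4 + h3 - hr
  have e3 : s • β - β = (s • b - b) * (s • (x ^ 3)) + (3 * a * b * x ^ 4 + 3 * b * x ^ 2 * r + 3 * b * x * α ^ 2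
      + b * α ^ 3) + (s • r' - r') := by
    have : s • β = s • b * s • (x ^ 3) + s • r' := by rw [hr', smul_add, smul_mul']
    rw [this]
    have h2 : s • (x ^ 3) = x ^ 3 + 3 * x ^ 2 * α + 3 * x * α ^ 2 + α ^ 3 := by rw [smul_pow', hα]; ring
    linear_combination b * h2 - hr' + 3 * b * x ^ 2 * hr
  have m1 : (t • a - a) * (t • (x ^ 2)) ∈ P ^ 5 := hmul (k := 3) (l := 2) (by omega) (ht a) (smul_pow_mem ht (xpow D 2))
  have m2 : 2 * a * x * r' ∈ P ^ 5 := by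
    rw [mul_assoc]; exact Ideal.mul_mem_left _ _ (hmul (k := 1) (l := 4) (by omega) hx1 hrm')
  have m3 : a * β ^ 2 ∈ P ^ 5 := by
    rw [pow_two β]; exact Ideal.mul_mem_left _ _ (hmul (k := 3) (l := 3) (by omega) hβ3 hβ3)
  have m4 : t • r - r ∈ P ^ 5 := A1 ht _ _ hrm
  have m5 : (s • b - b) * (s • (x ^ 3)) ∈ P ^ 5 := hmul (k := 2) (l := 3) (by omega) (hs b) (smul_pow_mem hs (xpow D 3))
  have m6 : 3 * b * x ^ 2 * r ∈ P ^ 5 := by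
    rw [mul_assoc]; exact Ideal.mul_mem_left _ _ (hmul (k := 2) (l := 3) (by omega) (xpow D 2) hrm)
  have m7 : 3 * b * x * α ^ 2 ∈ P ^ 5 := by
    rw [mul_assoc]; exact Ideal.mul_mem_left _ _ (hmul (k := 1) (l := 4) (by omega) hx1
      (by rw [pow_two α]; exact hmul (k := 2) (l := 2) (by omega) hα2 hα2))
  have m8 : b * α ^ 3 ∈ P ^ 5 := Ideal.mul_mem_left _ _ (by
    rw [pow_succ α]; exact hmul (k := 4) (l := 2) (by omega)
      (by rw [pow_two α]; exact hmul (k := 2) (l := 2) (by omega) hα2 hα2) hα2)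
  have m9 : s • r' - r' ∈ P ^ 5 := A1 hs _ _ hrm'
  have m : a * b * x ^ 4 ∈ P ^ 5 := by
    have e : a * b * x ^ 4 = (t • a - a) * (t • (x ^ 2)) + 2 * a * x * r' + a * β ^ 2 + (t • r - r) - (s • b - b) * (s • (x ^ 3))
      - 3 * b * x ^ 2 * r - 3 * b * x * α ^ 2 - b * α ^ 3 - (s • r' - r') := by
      linear_combination key - e3 + e2
    rw [e]
    exact sub_mem (sub_mem (sub_mem (sub_mem (sub_mem (add_mem (add_mem (add_mem m1 m2) m3) m4) m5) m6) m7) m8) m9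
  rcases valmul D.h0 (i := 0) (j := 4) (by simpa using m) with h | h
  · rw [zero_add, pow_one] at h
    rcases D.prime.mem_or_mem h with h | h
    · exfalso; apply hα3
      rw [hr]
      exact add_mem (hmul (k := 1) (l := 2) (by omega) (by simpa using h) (xpow D 2)) hrm
    · rw [hr']
      exact add_mem (hmul (k := 1) (l := 3) (by omega) (by simpa using h) (xpow D 3)) hrm'
  · exact absurd h (xpow_not D 4)

end C
end Ab


namespace Ab

section D
set_option linter.unusedSectionVars false
variable {B G : Type*} [CommRing B] [IsDedekindDomain B] [Group G] [MulSemiringAction G B] {P : Ideal B}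
variable {x : B} {p e : ℕ}
open Finset Polynomial
open scoped Pointwise

lemma eq_zero_of_mem_pows (D : Loc G P x p e) {y : B} (h : ∀ k, y ∈ P ^ k) : y = 0 := by
  have h1 := Ideal.iInf_pow_eq_bot_of_isDomain P D.prime.ne_top
  have : y ∈ (⨅ i : ℕ, P ^ i) := by simpa using h
  rw [h1] at this
  simpa using this

lemma eq_one_of_all (D : Loc G P x p e) {s : G} (h : ∀ k, s ∈ (P ^ k).inertia G) : s = 1 :=
  D.faith s fun y => sub_eq_zero.mp (eq_zero_of_mem_pows D fun k => h k y)

lemma exists_trivial [Finite G] (D : Loc G P x p e) : ∃ N, ∀ s ∈ (P ^ N).inertia G, s = 1 := by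
  classical
  have : ∀ s : G, ∃ k, s ∈ (P ^ k).inertia G → s = 1 := by
    intro s
    by_cases hs : s = 1
    · exact ⟨0, fun _ => hs⟩
    · by_contra! hc
      exact hs (eq_one_of_all D fun k => (hc k).1)
  choose f hf using this
  have := Fintype.ofFinite G
  refine ⟨Finset.univ.sup f, fun s hs => hf s (inertia_anti (Finset.le_sup (mem_univ s)) hs)⟩

lemma pow_p_mem (D : Loc G P x p e) {i : ℕ} (hi : 1 ≤ i) {s : G} (hs : s ∈ (P ^ (i + 1)).inertia G) :
    s ^ p ∈ (P ^ (i + 2)).inertia G := by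
  have := D.hp.two_le
  have := D.he
  exact A3 D.hp D.hpe hs (j := i + 1) (by nlinarith) (by omega)

lemma pow_pk_mem (D : Loc G P x p e) {s : G} (hs : s ∈ (P ^ 2).inertia G) (k : ℕ) :
    s ^ (p ^ k) ∈ (P ^ (k + 2)).inertia G := by
  induction k with
  | zero => simpa using hs
  | succ k ih =>
    rw [pow_succ p k, pow_mul]
    exact pow_p_mem D (i := k + 1) (by omega) ih

lemma exists_pk [Finite G] (D : Loc G P x p e) : ∃ k, ∀ s ∈ (P ^ 2).inertia G, s ^ (p ^ k) = 1 := by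
  obtain ⟨N, hN⟩ := exists_trivial D
  exact ⟨N, fun s hs => hN _ (inertia_anti (by omega) (pow_pk_mem D hs N))⟩

lemma p_mem (D : Loc G P x p e) : (p : B) ∈ P := by
  have := Ideal.pow_le_pow_right (I := P) (show 1 ≤ e from D.he) D.hpe
  simpa using this

lemma natCast_mem (D : Loc G P x p e) (m : ℕ) : (m : B) ∈ P ↔ p ∣ m := by
  constructor
  · intro h
    by_contra hc
    have hcop : IsCoprime (p : ℤ) (m : ℤ) := by
      rw [Nat.isCoprime_iff_coprime]; exact (Nat.Prime.coprime_iff_not_dvd D.hp).mpr hc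
    obtain ⟨a, b, hab⟩ := hcop
    have h1 : (a : B) * (p : B) + (b : B) * (m : B) = 1 := by exact_mod_cast congrArg (Int.cast : ℤ → B) hab
    apply D.prime.one_notMem
    rw [← h1]
    exact add_mem (Ideal.mul_mem_left _ _ (p_mem D)) (Ideal.mul_mem_left _ _ h)
  · rintro ⟨k, rfl⟩
    push_cast
    exact Ideal.mul_mem_right _ _ (p_mem D)

lemma smul_x_mem (D : Loc G P x p e) {s : G} (hs : s ∈ P.inertia G) : s • x ∈ P := by
  have := smul_pow_mem (i := 0) (by simpa using hs) (k := 1) (y := x) (by simpa using D.hx)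
  simpa using this

lemma tame_pow (D : Loc G P x p e) {s : G} (hs : s ∈ P.inertia G) :
    s ^ (p - 1) ∈ (P ^ 2).inertia G := by
  have := D.prime
  obtain ⟨m, hm⟩ := B4 D hs
  have hs1 : s ∈ (P ^ (0 + 1)).inertia G := by simpa using hs
  have hmP : (m : B) ∉ P := by
    intro h
    have h2 : (m : B) * x ∈ P ^ 2 := by rw [pow_two]; exact Ideal.mul_mem_mul h D.hx
    have h3 : s • x ∈ P ^ 2 := by simpa using add_mem hm h2
    have h4 := smul_pow_mem (inv_mem hs1) h3
    rw [inv_smul_smul] at h4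
    exact D.hx2 h4
  have hk : ∀ k : ℕ, s ^ k • x - ((m ^ k : ℕ) : B) * x ∈ P ^ 2 := by
    intro k
    induction k with
    | zero => simp
    | succ k ih =>
      have h1 := smul_pow_mem hs1 ih
      have h2 := add_mem h1 (Ideal.mul_mem_left _ ((m ^ k : ℕ) : B) hm)
      convert h2 using 1
      have : s • ((m ^ k : ℕ) : B) = ((m ^ k : ℕ) : B) :=
        map_natCast (MulSemiringAction.toRingHom G B s) _
      rw [pow_succ' s, mul_smul, smul_sub, smul_mul', this]
      push_cast
      ring
  apply B1 D.h0 D.mono (pow_mem hs _)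
  have hf : (m ^ (p - 1) : ℕ) ≡ 1 [MOD p] := by
    have := Nat.ModEq.pow_totient (x := m) (n := p)
      ((Nat.Prime.coprime_iff_not_dvd D.hp).mpr (fun h => hmP ((natCast_mem D m).mpr h))).symm
    rwa [Nat.totient_prime D.hp] at this
  have hf2 : (((m ^ (p - 1) : ℕ) : B) - 1) ∈ P := by
    have h1 : 1 ≤ m ^ (p - 1) := Nat.one_le_pow _ _ (Nat.pos_of_ne_zero (by rintro rfl; simp at hmP))
    have h2 := (Nat.modEq_iff_dvd' h1).mp hf.symm
    have := (natCast_mem D _).mpr h2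
    rw [Nat.cast_sub h1] at this
    simpa using this
  have h5 := add_mem (hk (p - 1)) (show _ ∈ P ^ 2 by rw [pow_two]; exact Ideal.mul_mem_mul hf2 D.hx)
  convert h5 using 1
  ring

/-- tame part of inertia -/
def tame (D : Loc G P x p e) : Subgroup G where
  carrier := {s | s ∈ P.inertia G ∧ s ^ (p - 1) = 1}
  one_mem' := ⟨one_mem _, one_pow _⟩
  mul_mem' := by
    rintro a b ⟨ha, ha'⟩ ⟨hb, hb'⟩
    refine ⟨mul_mem ha hb, ?_⟩
    have : Commute a b := D.hab a b
    rw [this.mul_pow, ha', hb', one_mul]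
  inv_mem' := by
    rintro a ⟨ha, ha'⟩
    exact ⟨inv_mem ha, by rw [inv_pow, ha', inv_one]⟩

lemma tame_le (D : Loc G P x p e) : tame D ≤ P.inertia G := fun _ h => h.1

lemma tame_wild [Finite G] (D : Loc G P x p e) {s : G} (hs : s ^ (p - 1) = 1) (hs' : s ∈ (P ^ 2).inertia G) :
    s = 1 := by
  obtain ⟨k, hk⟩ := exists_pk D
  have h1 := orderOf_dvd_of_pow_eq_one (hk s hs')
  have h2 := orderOf_dvd_of_pow_eq_one hs
  have h3 : Nat.Coprime (p ^ k) (p - 1) := by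
    apply Nat.Coprime.pow_left
    rw [Nat.Prime.coprime_iff_not_dvd D.hp]
    intro h
    have := D.hp.two_le
    have := Nat.le_of_dvd (by omega) h
    omega
  exact orderOf_eq_one_iff.mp (Nat.eq_one_of_dvd_coprimes h3 h1 h2)

lemma card_tame [Finite G] (D : Loc G P x p e) : Nat.card (tame D) ≤ p - 1 := by
  have := D.prime
  have := Fact.mk D.hp
  have hB : ∀ s : tame D, ∃ m : ℕ, (s : G) • x - (m : B) * x ∈ P ^ 2 := fun s => B4 D s.2.1
  choose f hf using hB
  have h1 : ∀ s, ((f s : ℕ) : ZMod p) ≠ 0 := by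
    intro s h
    have hm := (natCast_mem D _).mpr ((ZMod.natCast_eq_zero_iff _ _).mp h)
    have h2 : (f s : B) * x ∈ P ^ 2 := by rw [pow_two]; exact Ideal.mul_mem_mul hm D.hx
    have h3 : (s : G) • x ∈ P ^ 2 := by simpa using add_mem (hf s) h2
    have h4 := smul_pow_mem (i := 0) (inv_mem (show (s : G) ∈ (P ^ (0 + 1)).inertia G by simpa using s.2.1)) h3
    rw [inv_smul_smul] at h4
    exact D.hx2 h4
  let φ : tame D → {a : ZMod p // a ≠ 0} := fun s => ⟨f s, h1 s⟩
  have hφ : Function.Injective φ := by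
    intro s t hst
    have h2 : ((f s : ℕ) : ZMod p) = f t := congrArg Subtype.val hst
    have h3 : (f s : B) - (f t : B) ∈ P := by
      have := (ZMod.intCast_zmod_eq_zero_iff_dvd ((f s : ℤ) - f t) p).mp (by push_cast; rw [h2, sub_self])
      obtain ⟨c, hc⟩ := this
      have : (f s : B) - (f t : B) = (p : B) * (c : B) := by exact_mod_cast congrArg (Int.cast : ℤ → B) hc
      rw [this]
      exact Ideal.mul_mem_right _ _ (p_mem D)
    have h4 : ((f s : B) - (f t : B)) * x ∈ P ^ 2 := by rw [pow_two]; exact Ideal.mul_mem_mul h3 D.hx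
    have h5 : (s : G) • x - (t : G) • x ∈ P ^ 2 := by
      convert add_mem (sub_mem (hf s) (hf t)) h4 using 1; ring
    have h6 := smul_pow_mem (i := 0) (inv_mem (show (t : G) ∈ (P ^ (0 + 1)).inertia G by simpa using t.2.1)) h5
    rw [smul_sub, inv_smul_smul, ← mul_smul] at h6
    have h7 : (t : G)⁻¹ * s ∈ tame D := mul_mem (inv_mem t.2) s.2
    have h8 := tame_wild D h7.2 (B1 D.h0 D.mono h7.1 h6)
    exact Subtype.ext (inv_mul_eq_one.mp h8).symm
  have h9 := Nat.card_le_card_of_injective φ hφ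
  have h10 : Nat.card {a : ZMod p // a ≠ 0} = p - 1 := by
    rw [Nat.card_eq_fintype_card, Fintype.card_subtype_compl, ZMod.card, Fintype.card_subtype_eq]
  omega

lemma pow_mem_tame [Finite G] (D : Loc G P x p e) : ∃ k, ∀ s ∈ P.inertia G, s ^ (p ^ k) ∈ tame D := by
  obtain ⟨k, hk⟩ := exists_pk D
  refine ⟨k, fun s hs => ⟨pow_mem hs _, ?_⟩⟩
  rw [← pow_mul, mul_comm, pow_mul]
  exact hk _ (tame_pow D hs)

/-- if inertia is a p-group, it is wild -/
lemma wild_of_pgroup [Finite G] (D : Loc G P x p e) (h : ∃ k, ∀ s ∈ P.inertia G, s ^ (p ^ k) = 1) :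
    P.inertia G ≤ (P ^ 2).inertia G := by
  obtain ⟨k, hk⟩ := h
  intro s hs
  have h1 := tame_pow D hs
  have h3 : Nat.Coprime (p - 1) (p ^ k) := by
    apply Nat.Coprime.pow_right
    rw [Nat.coprime_comm, Nat.Prime.coprime_iff_not_dvd D.hp]
    intro h
    have := D.hp.two_le
    have := Nat.le_of_dvd (by omega) h
    omega
  have h4 := orderOf_dvd_of_pow_eq_one (hk s hs)
  obtain ⟨m, hm⟩ := exists_pow_eq_self_of_coprime (Nat.Coprime.coprime_dvd_right h4 h3)
  rw [← hm]
  exact pow_mem h1 m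

end D
end Ab


namespace Ab

section E0
lemma exists_index_p {G : Type*} [Group G] [Finite G] {p : ℕ} (hp : p.Prime) (I N : Subgroup G)
    (hI : ∃ a, Nat.card I = p ^ a) (hN : N ≤ I) (hne : ¬ I ≤ N) :
    ∃ H : Subgroup G, N ≤ H ∧ H ≤ I ∧ Nat.card H * p = Nat.card I := by
  have := Fact.mk hp
  obtain ⟨a, ha⟩ := hI
  have hc : Nat.card (N.subgroupOf I) = Nat.card N := Nat.card_congr (Subgroup.subgroupOfEquivOfLe hN).toEquiv
  obtain ⟨n, hn, hn'⟩ := (Nat.dvd_prime_pow hp).mp (ha ▸ Subgroup.card_dvd_of_le hN)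
  have hlt : n < a := by
    rcases lt_or_eq_of_le hn with h | h
    · exact h
    · exfalso
      subst h
      exact hne (Subgroup.eq_of_le_of_card_ge hN (by rw [ha, hn'])).ge
  obtain ⟨K, hK, hK'⟩ := Sylow.exists_subgroup_card_pow_prime_le p (n := n) (m := a - 1)
    (by rw [ha]; exact pow_dvd_pow _ (by omega)) (N.subgroupOf I) (by rw [hc, hn']) (by omega)
  refine ⟨K.map I.subtype, ?_, ?_, ?_⟩
  · intro u hu
    exact ⟨⟨u, hN hu⟩, hK' hu, rfl⟩
  · rintro _ ⟨u, -, rfl⟩; exact u.2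
  · rw [Subgroup.card_map_of_injective (Subgroup.subtype_injective I), hK, ha, ← pow_succ]
    congr 1; omega

lemma E7 {G : Type*} [Group G] [Finite G] (hab : ∀ σ τ : G, σ * τ = τ * σ) {p : ℕ} (hp : p.Prime)
    (I : Subgroup G) (hI : ∃ a, Nat.card I = p ^ a) {s t : G} (hs : s ∈ I) (ht : t ∈ I)
    (hst : I ≤ Subgroup.zpowers s ⊔ Subgroup.zpowers t) :
    ∃ N : Subgroup G, N ≤ I ∧ (∃ g ∈ I, ∀ u ∈ I, ∃ k : ℕ, u * (g ^ k)⁻¹ ∈ N) ∧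
      ∃ b, Nat.card I = Nat.card N * p ^ b ∧ Nat.card I ≤ p ^ b * p ^ b ∧ (t = 1 → Nat.card I ≤ p ^ b) := by
  classical
  letI : CommGroup G := { (inferInstance : Group G) with mul_comm := hab }
  have hcard : ∀ M : ℕ, 0 < M → (∀ u ∈ I, u ^ M = 1) → Nat.card I ≤ M * M ∧ (t = 1 → Nat.card I ≤ M) := by
    intro M hM hu
    have h1 : Nat.card (Subgroup.zpowers s) ≤ M := by
      rw [Nat.card_zpowers]; exact orderOf_le_of_pow_eq_one hM (hu s hs)
    have h2 : Nat.card (Subgroup.zpowers t) ≤ M := by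
      rw [Nat.card_zpowers]; exact orderOf_le_of_pow_eq_one hM (hu t ht)
    constructor
    · refine le_trans ?_ (Nat.mul_le_mul h1 h2)
      rw [← Nat.card_prod]
      have hmem : ∀ u : I, ∃ y : Subgroup.zpowers s × Subgroup.zpowers t, (y.1 : G) * y.2 = u := by
        intro u
        obtain ⟨y, hy, z, hz, h⟩ := Subgroup.mem_sup.mp (hst u.2)
        exact ⟨⟨⟨y, hy⟩, ⟨z, hz⟩⟩, h⟩
      choose F hF using hmem
      apply Nat.card_le_card_of_injective F
      intro u v huv
      apply Subtype.ext
      rw [← hF, ← hF, huv]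
    · rintro rfl
      rw [Subgroup.zpowers_one_eq_bot, sup_bot_eq] at hst
      exact (Subgroup.card_le_of_le hst).trans h1
  obtain ⟨ι, hι, n, hn, ⟨f⟩⟩ := CommGroup.equiv_prod_multiplicative_zmod_of_finite I
  have hn0 : ∀ i, NeZero (n i) := fun i => ⟨by have := hn i; omega⟩
  rcases isEmpty_or_nonempty ι with hE | hE
  · have h1 : Nat.card I = 1 := by
      rw [Nat.card_congr f.toEquiv]; simp
    refine ⟨I, le_rfl, ⟨1, one_mem _, fun u hu => ⟨0, by simpa using hu⟩⟩, 0, by simp, by simp [h1], by simp [h1]⟩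
  obtain ⟨i0, hi0⟩ := Finite.exists_max n
  have hc : Nat.card I = ∏ i, n i := by
    rw [Nat.card_congr f.toEquiv, Nat.card_pi]
    refine Finset.prod_congr rfl fun i _ => ?_
    rw [Nat.card_congr Multiplicative.toAdd, Nat.card_zmod]
  obtain ⟨a, ha⟩ := hI
  have hb : ∀ i, ∃ b, n i = p ^ b := by
    intro i
    have : n i ∣ p ^ a := by rw [← ha, hc]; exact Finset.dvd_prod_of_mem n (Finset.mem_univ i)
    obtain ⟨b, -, h⟩ := (Nat.dvd_prime_pow hp).mp this
    exact ⟨b, h⟩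
  choose b hb using hb
  have hdvd : ∀ i, n i ∣ n i0 := by
    intro i
    have := hi0 i
    rw [hb, hb] at this ⊢
    exact pow_dvd_pow _ ((Nat.pow_le_pow_iff_right hp.one_lt).mp this)
  have hexp : ∀ u ∈ I, u ^ (n i0) = 1 := by
    intro u hu
    have : (⟨u, hu⟩ : I) ^ (n i0) = 1 := by
      apply f.injective
      rw [map_pow, map_one]
      funext i
      rw [Pi.pow_apply, Pi.one_apply]
      apply Multiplicative.toAdd.injective
      rw [toAdd_pow, toAdd_one, nsmul_eq_mul, (ZMod.natCast_eq_zero_iff _ _).mpr (hdvd i), zero_mul]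
    exact congrArg Subtype.val this
  let π : I →* Multiplicative (ZMod (n i0)) := (Pi.evalMonoidHom _ i0).comp f.toMonoidHom
  have hπ : ∀ u, π u = f u i0 := fun u => rfl
  let g : I := f.symm (Pi.mulSingle i0 (Multiplicative.ofAdd 1))
  have hg : π g = Multiplicative.ofAdd 1 := by rw [hπ]; simp [g]
  have hgk : ∀ u : I, π (g ^ (Multiplicative.toAdd (π u)).val) = π u := by
    intro u
    rw [map_pow, hg]
    apply Multiplicative.toAdd.injective
    rw [toAdd_pow, toAdd_ofAdd, nsmul_eq_mul, mul_one, ZMod.natCast_zmod_val]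
  refine ⟨π.ker.map I.subtype, ?_, ⟨g, g.2, ?_⟩, b i0, ?_, ?_⟩
  · rintro _ ⟨u, -, rfl⟩; exact u.2
  · intro u hu
    refine ⟨(Multiplicative.toAdd (π ⟨u, hu⟩)).val, ⟨⟨u, hu⟩ * (g ^ (Multiplicative.toAdd (π ⟨u, hu⟩)).val)⁻¹, ?_, rfl⟩⟩
    show _ ∈ π.ker
    rw [MonoidHom.mem_ker, map_mul, map_inv, hgk, mul_inv_cancel]
  · rw [Subgroup.card_map_of_injective (Subgroup.subtype_injective I), ← hb, ← Subgroup.card_mul_index π.ker,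
      Subgroup.index_ker, MonoidHom.range_eq_top.mpr (fun c => ?_), Subgroup.card_top,
      Nat.card_congr Multiplicative.toAdd, Nat.card_zmod]
    refine ⟨g ^ (Multiplicative.toAdd c).val, ?_⟩
    rw [map_pow, hg]
    apply Multiplicative.toAdd.injective
    rw [toAdd_pow, toAdd_ofAdd, nsmul_eq_mul, mul_one, ZMod.natCast_zmod_val]
  · rw [← hb]
    exact hcard _ (by have := hn i0; omega) hexp

end E0

section E
set_option linter.unusedSectionVars false
variable {B G : Type*} [CommRing B] [IsDedekindDomain B] [Group G] [MulSemiringAction G B] {P : Ideal B}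
variable {x : B} {p e : ℕ} [Finite G]
open Finset Polynomial
open scoped Pointwise

/-- quotient hypothesis -/
def QH (G : Type*) {B : Type*} [CommRing B] [Group G] [MulSemiringAction G B] (P : Ideal B)
    (p : ℕ) : Prop := ∀ H : Subgroup G, H ≤ P.inertia G → Nat.card H * p = Nat.card (P.inertia G) →
  ∀ σ ∈ P.inertia G, σ ∉ H → ∃ y : B, (∀ h ∈ H, h • y = y) ∧
    σ • y - y ∉ P ^ ((if p = 2 then 3 else 2) * Nat.card H + 1)

lemma E1 (D : Loc G P x p e) (hq : QH G P p) {H : Subgroup G} (hH : H ≤ P.inertia G)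
    (hc : Nat.card H * p = Nat.card (P.inertia G)) {σ : G} (hσ : σ ∈ P.inertia G) (hσH : σ ∉ H)
    [Fintype H] (a : H → ℕ) (ha : ∀ h : H, σ * h ∈ (P ^ (a h)).inertia G) :
    ∑ h, a h ≤ (if p = 2 then 3 else 2) * Nat.card H := by
  have := D.prime
  obtain ⟨y, hy, hy'⟩ := hq H hH hc σ hσ hσH
  by_contra! hlt
  apply hy'
  refine Ideal.pow_le_pow_right hlt (B2 D.h0 D.mono H hH ?_ hσ hy a fun h => ha h x)
  intro h hh h' hh' he
  have h1 : (h'⁻¹ * h) • x - x = 0 := by rw [mul_smul, he, inv_smul_smul, sub_self]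
  have h2 : h'⁻¹ * h = 1 := eq_one_of_all D fun k => B1 D.h0 D.mono
    (mul_mem (inv_mem (hH hh')) (hH hh)) (by rw [h1]; exact zero_mem _)
  exact (inv_mul_eq_one.mp h2).symm

/-- if everything in I is at level c (the maximal average), G_{c} lies in all index-p subgroups -/
lemma E2 (D : Loc G P x p e) (hq : QH G P p)
    (hw : P.inertia G ≤ (P ^ (if p = 2 then 3 else 2)).inertia G)
    {H : Subgroup G} (hH : H ≤ P.inertia G)
    (hc : Nat.card H * p = Nat.card (P.inertia G)) :
    (P ^ ((if p = 2 then 3 else 2) + 1)).inertia G ≤ H := by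
  classical
  intro σ hσ
  by_contra hσH
  have := Fintype.ofFinite H
  have hσI : σ ∈ P.inertia G := inertia_le (by omega) hσ
  have := E1 D hq hH hc hσI hσH (fun h => (if p = 2 then 3 else 2) + if h = 1 then 1 else 0) (by
    intro h
    by_cases hh : h = 1
    · rw [if_pos hh, hh]; simpa using hσ
    · rw [if_neg hh, add_zero]
      exact hw (mul_mem hσI (hH h.2)))
  rw [Finset.sum_add_distrib] at this
  simp only [sum_const, card_univ, smul_eq_mul, Finset.sum_ite_eq', mem_univ, if_true,
    Nat.card_eq_fintype_card] at this
  rw [mul_comm] at this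
  omega

lemma E3 (D : Loc G P x p e) (hI : ∃ a, Nat.card (P.inertia G) = p ^ a) (J S : Subgroup G)
    (hJ : ∀ H : Subgroup G, H ≤ P.inertia G → Nat.card H * p = Nat.card (P.inertia G) → J ≤ H)
    (hS : S ≤ P.inertia G) (h : P.inertia G ≤ S ⊔ J) : P.inertia G ≤ S := by
  by_contra hc
  obtain ⟨H, h1, h2, h3⟩ := exists_index_p D.hp _ S hI hS hc
  have h4 : P.inertia G ≤ H := h.trans (sup_le h1 (hJ H h2 h3))
  have h5 : H = P.inertia G := le_antisymm h2 h4
  rw [h5] at h3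
  have := D.hp.two_le
  have : 0 < Nat.card (P.inertia G) := Nat.card_pos
  nlinarith

lemma mem_sup_of_ratio {S J : Subgroup G} {s u : G} {m : ℕ} (hs : s ∈ S) (h : u * (s ^ m)⁻¹ ∈ J) : u ∈ S ⊔ J := by
  have : u = (u * (s ^ m)⁻¹) * s ^ m := by group
  rw [this]
  exact mul_mem (le_sup_right (a := S) h) (le_sup_left (b := J) (pow_mem hs m))

lemma E4 (D : Loc G P x p e) (hI : ∃ a, Nat.card (P.inertia G) = p ^ a) (hq : QH G P p)
    (hw : P.inertia G ≤ (P ^ (if p = 2 then 3 else 2)).inertia G) :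
    ∃ s ∈ P.inertia G, P.inertia G ≤ Subgroup.zpowers s := by
  by_cases hb : P.inertia G ≤ (P ^ ((if p = 2 then 3 else 2) + 1)).inertia G
  · refine ⟨1, one_mem _, E3 D hI _ _ (fun H => E2 D hq hw) (by simp) ?_⟩
    exact hb.trans le_sup_right
  · obtain ⟨s, hs, hs'⟩ := SetLike.not_le_iff_exists.mp hb
    refine ⟨s, hs, E3 D hI _ _ (fun H => E2 D hq hw) (by simpa using hs) ?_⟩
    intro u hu
    obtain ⟨i, hi, hi'⟩ : ∃ i, (if p = 2 then 3 else 2) = i + 1 ∧ 1 ≤ i := by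
      split_ifs
      · exact ⟨2, by norm_num⟩
      · exact ⟨1, by norm_num⟩
    rw [hi] at hw hs' ⊢
    obtain ⟨m, hm⟩ := B3 D hi' (hw hs) (hw hu) hs'
    exact mem_sup_of_ratio (Subgroup.mem_zpowers s) hm

lemma E5 (D : Loc G P x p e) (h2 : p = 2) (hq : QH G P p)
    (hw : P.inertia G ≤ (P ^ 2).inertia G) (hn : ¬ P.inertia G ≤ (P ^ 3).inertia G)
    {H : Subgroup G} (hH : H ≤ P.inertia G)
    (hc : Nat.card H * p = Nat.card (P.inertia G)) :
    (P ^ 5).inertia G ≤ H := by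
  classical
  obtain ⟨s, hs, hs'⟩ := SetLike.not_le_iff_exists.mp hn
  have h34 : (P ^ 3).inertia G ≤ (P ^ 4).inertia G := fun t ht => B5 D (hw hs) hs' ht
  intro τ hτ
  by_contra hτH
  have := Fintype.ofFinite H
  have hτI : τ ∈ P.inertia G := inertia_le (by omega) hτ
  have hE := E1 D hq hH hc hτI hτH (fun h => 2 + (if (h : G) ∈ (P ^ 3).inertia G then 2 else 0) + if h = 1 then 1 else 0) (by
    intro h
    by_cases hh : h = 1
    · rw [if_pos hh, hh]; simpa using hτ
    · rw [if_neg hh, add_zero]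
      split_ifs with h3
      · exact mul_mem (inertia_anti (by omega) hτ) (h34 h3)
      · exact hw (mul_mem hτI (hH h.2)))
  rw [Finset.sum_add_distrib, Finset.sum_add_distrib] at hE
  simp only [sum_const, card_univ, smul_eq_mul, Finset.sum_ite_eq', mem_univ, if_true, if_pos h2,
    Nat.card_eq_fintype_card] at hE
  have h6 : Fintype.card H ≤ ∑ h : H, (if (h : G) ∈ (P ^ 3).inertia G then 2 else 0) := by
    rw [← Finset.sum_filter, Finset.sum_const, smul_eq_mul]
    by_cases hHs : ∃ h0 : H, (h0 : G) ∉ (P ^ 3).inertia G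
    · obtain ⟨h0, hh0⟩ := hHs
      have hcard : (univ.filter fun h : H => ¬ (h : G) ∈ (P ^ 3).inertia G).card ≤
          (univ.filter fun h : H => (h : G) ∈ (P ^ 3).inertia G).card := by
        refine Finset.card_le_card_of_injOn (fun h => h * h0) ?_ (fun a _ b _ h => mul_right_cancel h)
        intro h hh
        simp only [coe_filter, mem_univ, true_and, Set.mem_ofPred_eq] at hh ⊢
        obtain ⟨m, hm⟩ := B3 D (i := 1) le_rfl (hw (hH h0.2)) (hw (hH h.2)) hh0
        have hsq : (h0 : G) ^ 2 ∈ (P ^ 3).inertia G := by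
          have := pow_p_mem D (i := 1) le_rfl (hw (hH h0.2)); rwa [h2] at this
        rcases Nat.even_or_odd' m with ⟨c, hc | hc⟩
        · exfalso; apply hh
          have := mul_mem hm (pow_mem hsq c)
          rw [← pow_mul, ← hc] at this
          simpa using this
        · have := mul_mem hm (pow_mem hsq (c + 1))
          rw [← pow_mul, show 2 * (c + 1) = m + 1 by omega, pow_succ (h0 : G) m, ← mul_assoc] at this
          simpa using this
      have := Finset.card_filter_add_card_filter_not (s := (univ : Finset H)) (fun h : H => (h : G) ∈ (P ^ 3).inertia G)
      rw [card_univ] at this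
      omega
    · push Not at hHs
      rw [Finset.filter_true_of_mem (fun h _ => hHs h), card_univ]
      omega
  omega

lemma E6 (D : Loc G P x p e) (hI : ∃ a, Nat.card (P.inertia G) = p ^ a) (hq : QH G P p) :
    ∃ s ∈ P.inertia G, ∃ t ∈ P.inertia G, P.inertia G ≤ Subgroup.zpowers s ⊔ Subgroup.zpowers t ∧
      (p ≠ 2 → t = 1) := by
  have hw : P.inertia G ≤ (P ^ 2).inertia G := by
    apply wild_of_pgroup D
    obtain ⟨a, ha⟩ := hI
    refine ⟨a, fun s hs => ?_⟩
    have := pow_card_eq_one' (x := (⟨s, hs⟩ : P.inertia G))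
    rw [ha] at this
    exact congrArg Subtype.val this
  by_cases h : P.inertia G ≤ (P ^ (if p = 2 then 3 else 2)).inertia G
  · obtain ⟨s, hs, h⟩ := E4 D hI hq h
    exact ⟨s, hs, 1, one_mem _, h.trans le_sup_left, fun _ => rfl⟩
  · have h2 : p = 2 := by
      by_contra hp; rw [if_neg hp] at h; exact h hw
    rw [if_pos h2] at h
    obtain ⟨s, hs, hs'⟩ := SetLike.not_le_iff_exists.mp h
    have h34 : (P ^ 3).inertia G ≤ (P ^ 4).inertia G := fun t ht => B5 D (hw hs) hs' ht
    have key : ∃ t ∈ P.inertia G, (P ^ 4).inertia G ≤ Subgroup.zpowers t ⊔ (P ^ 5).inertia G := by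
      by_cases hb : (P ^ 4).inertia G ≤ (P ^ 5).inertia G
      · exact ⟨1, one_mem _, hb.trans le_sup_right⟩
      · obtain ⟨t, ht, ht'⟩ := SetLike.not_le_iff_exists.mp hb
        refine ⟨t, inertia_le (by omega) ht, fun u hu => ?_⟩
        obtain ⟨m, hm⟩ := B3 D (i := 3) (by omega) ht hu ht'
        exact mem_sup_of_ratio (Subgroup.mem_zpowers t) hm
    obtain ⟨t, ht, key⟩ := key
    refine ⟨s, hs, t, ht, E3 D hI ((P ^ 5).inertia G) _ (fun H => E5 D h2 hq hw h)
      (sup_le (by simpa using hs) (by simpa using ht)) ?_, fun h => absurd h2 h⟩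
    intro u hu
    obtain ⟨m, hm⟩ := B3 D (i := 1) le_rfl (hw hs) (hw hu) hs'
    have := mem_sup_of_ratio (Subgroup.mem_zpowers s) ((h34.trans key) hm)
    rwa [← sup_assoc] at this

end E
end Ab


namespace Ab

section F
open Polynomial
open scoped Pointwise

attribute [local instance] Ideal.Quotient.field in
lemma F_res {A B G : Type*} [CommRing A] [CommRing B] [Algebra A B] [Group G] [Finite G]
    [MulSemiringAction G B] [IsGaloisGroup G A B] (P : Ideal B) (q : Ideal A) [P.LiesOver q]
    [P.IsMaximal] [q.IsMaximal] [Finite (A ⧸ q)] [Module.Finite A B] (c : B)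
    (hc : ∀ t ∈ MulAction.stabilizer G P, t • c - c ∈ P) : ∃ a : A, c - algebraMap A B a ∈ P := by
  have := Ideal.Quotient.normal (A := A) (B := B) G q P
  have : Module.Finite (A ⧸ q) (B ⧸ P) := inferInstance
  have : IsGalois (A ⧸ q) (B ⧸ P) := ⟨⟩
  have h1 : (Ideal.Quotient.mk P c) ∈ Set.range (algebraMap (A ⧸ q) (B ⧸ P)) := by
    rw [IsGalois.mem_range_algebraMap_iff_fixed]
    intro f
    obtain ⟨t, rfl⟩ := Ideal.Quotient.stabilizerHom_surjective G q P f
    have := hc t t.2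
    rw [← Ideal.Quotient.eq] at this
    exact this
  obtain ⟨a, ha⟩ := h1
  obtain ⟨a, rfl⟩ := Ideal.Quotient.mk_surjective a
  refine ⟨a, ?_⟩
  rw [← Ideal.Quotient.eq, ← ha]
  rfl

lemma F_pow {A B G : Type*} [CommRing A] [CommRing B] [IsDedekindDomain B] [Algebra A B] [Group G] [Finite G]
    [MulSemiringAction G B] [IsGaloisGroup G A B] (P : Ideal B) (q : Ideal A) [P.LiesOver q]
    [P.IsMaximal] [q.IsMaximal] (hG : ∀ g : G, g • P = P) : ∃ k, P ^ k ≤ q.map (algebraMap A B) := by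
  have hrad : P ≤ (q.map (algebraMap A B)).radical := by
    rw [Ideal.radical_eq_sInf]
    refine le_sInf ?_
    rintro J ⟨hJ, hJp⟩
    have : J.LiesOver q := by
      constructor
      have h1 : q ≤ J.under A := Ideal.map_le_iff_le_comap.mp hJ
      exact (Ideal.IsMaximal.eq_of_le inferInstance (Ideal.IsPrime.under A J).ne_top h1)
    obtain ⟨σ, hσ⟩ := Ideal.exists_smul_eq_of_isGaloisGroup q P J G
    rw [hG] at hσ
    exact hσ.le
  obtain ⟨n, hn⟩ := Ideal.exists_radical_pow_le_of_fg (q.map (algebraMap A B)) (IsNoetherian.noetherian _)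
  exact ⟨n, (Ideal.pow_right_mono hrad n).trans hn⟩

lemma F_digits {A B : Type*} [CommRing A] [CommRing B] [IsDedekindDomain B] [Algebra A B]
    (P : Ideal B) [P.IsPrime] (h0 : P ≠ ⊥) {x : B} (hx : x ∈ P) (hx2 : x ∉ P ^ 2)
    (hres : ∀ c : B, ∃ a : A, c - algebraMap A B a ∈ P) (y : B) (k : ℕ) :
    ∃ g : A[X], y - aeval x g ∈ P ^ k := by
  have hxn : ∀ k, x ^ k ∉ P ^ (k + 1) := by
    intro k
    induction k with
    | zero => simpa using Ideal.IsPrime.one_notMem inferInstance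
    | succ k ih =>
      intro h
      rw [pow_succ x k] at h
      rcases valmul h0 (i := k) (j := 1) h with h | h
      · exact ih h
      · exact hx2 h
  induction k with
  | zero => exact ⟨0, by simp⟩
  | succ k ih =>
    obtain ⟨g, hg⟩ := ih
    obtain ⟨c, hc⟩ := exists_scale h0 (Ideal.pow_mem_pow hx k) (hxn k) hg
    obtain ⟨a, ha⟩ := hres c
    refine ⟨g + C a * X ^ k, ?_⟩
    have h2 := Ideal.mul_mem_mul ha (Ideal.pow_mem_pow hx k)
    rw [← pow_succ'] at h2
    convert add_mem hc h2 using 1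
    simp only [map_add, map_mul, aeval_C, map_pow, aeval_X]
    ring

lemma F_mono {A B G : Type*} [CommRing A] [CommRing B] [IsDedekindDomain B] [Algebra A B] [Group G] [Finite G]
    [MulSemiringAction G B] (P : Ideal B) [IsGaloisGroup (P.inertia G) A B] (q : Ideal A) [P.LiesOver q]
    [P.IsMaximal] [q.IsMaximal] [Finite (A ⧸ q)] [Module.Finite A B] (h0 : P ≠ ⊥)
    {x : B} (hx : x ∈ P) (hx2 : x ∉ P ^ 2) : Mono G P x := by
  have hst : ∀ g : P.inertia G, g • P = P := by
    intro g
    have h1 : ∀ g : P.inertia G, ∀ y ∈ P, g • y ∈ P := by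
      intro g y hy
      have := add_mem (g.2 y) hy
      rw [sub_add_cancel] at this
      exact this
    apply le_antisymm
    · intro z hz
      have hz' := Ideal.mem_pointwise_smul_iff_inv_smul_mem.mp hz
      have := h1 g _ hz'
      rwa [smul_inv_smul] at this
    · intro z hz
      have := Ideal.smul_mem_pointwise_smul g _ _ (h1 g⁻¹ z hz)
      rwa [smul_inv_smul] at this
  have hres : ∀ c : B, ∃ a : A, c - algebraMap A B a ∈ P := fun c =>
    F_res (G := P.inertia G) P q c (fun t _ => t.2 c)
  obtain ⟨k, hk⟩ := F_pow (G := P.inertia G) P q hst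
  let S : Submodule A B := Subalgebra.toSubmodule (Algebra.adjoin A {x})
  obtain ⟨r, hr, hr'⟩ := Submodule.exists_sub_one_mem_and_smul_eq_zero_of_fg_of_le_smul q
    (⊤ : Submodule A (B ⧸ S)) (Module.Finite.fg_top) (by
      intro z _
      obtain ⟨y, rfl⟩ := Submodule.mkQ_surjective S z
      obtain ⟨g, hg⟩ := F_digits P h0 hx hx2 hres y k
      have h1 : y - aeval x g ∈ q • (⊤ : Submodule A B) := by
        have := hk hg
        rwa [← Submodule.restrictScalars_mem A, ← Ideal.smul_top_eq_map] at this
      have h2 : S.mkQ y = S.mkQ (y - aeval x g) := by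
        rw [map_sub, eq_comm, sub_eq_self, Submodule.mkQ_apply, Submodule.Quotient.mk_eq_zero]
        have h9 : aeval x g ∈ Algebra.adjoin A {x} := by
          rw [Algebra.adjoin_singleton_eq_range_aeval A x]; exact ⟨g, rfl⟩
        exact h9
      rw [h2]
      have h3 := Submodule.mem_map_of_mem (f := S.mkQ) h1
      rw [Submodule.map_smul''] at h3
      exact Submodule.smul_mono le_rfl le_top h3)
  intro y
  have h4 : r • y ∈ S := by
    have := hr' (S.mkQ y) trivial
    rwa [← map_smul, Submodule.mkQ_apply, Submodule.Quotient.mk_eq_zero] at this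
  have h5 : r • y ∈ (aeval (R := A) x).range := by
    rw [← Algebra.adjoin_singleton_eq_range_aeval]; exact h4
  obtain ⟨g, hg⟩ := h5
  have hfix : ∀ s ∈ P.inertia G, ∀ a : A, s • algebraMap A B a = algebraMap A B a := by
    intro s hs a
    exact smul_algebraMap (⟨s, hs⟩ : P.inertia G) a
  refine ⟨algebraMap A B r, ?_, g.map (algebraMap A B), ?_, ?_⟩
  · intro h
    have h6 : r ∈ q := by rw [P.over_def q]; exact h
    have h7 : (1 : A) ∈ q := by simpa using sub_mem h6 hr
    exact (Ideal.IsMaximal.ne_top (I := q) inferInstance) ((Ideal.eq_top_iff_one q).mpr h7)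
  · intro s hs
    refine ⟨hfix s hs r, ?_⟩
    rw [Polynomial.map_map]
    congr 1
    ext a
    exact hfix s hs a
  · rw [← Algebra.smul_def, ← hg, eval_map_algebraMap]
    rfl

end F
end Ab


namespace Ab

section G
set_option linter.unusedSectionVars false
open scoped Pointwise

variable {L : Type*} [Field L] [NumberField L] [IsGalois ℚ L]

lemma ne_bot_of_over (P : Ideal (𝓞 L)) (p : ℕ) (hp : p.Prime) [P.LiesOver (Ideal.span {(p : ℤ)})] : P ≠ ⊥ := by
  rintro rfl
  have h1 : (p : ℤ) ∈ (⊥ : Ideal (𝓞 L)).under ℤ := by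
    rw [← Ideal.over_def (⊥ : Ideal (𝓞 L)) (Ideal.span {(p : ℤ)})]
    exact Ideal.mem_span_singleton_self _
  have h2 : ((p : ℤ) : 𝓞 L) = 0 := by simpa using h1
  have : (p : 𝓞 L) = 0 := by exact_mod_cast h2
  exact hp.ne_zero (by exact_mod_cast this)

lemma card_inertia (P : Ideal (𝓞 L)) [P.IsMaximal] (p : ℕ) (hp : p.Prime) [P.LiesOver (Ideal.span {(p : ℤ)})] :
    Nat.card (P.inertia Gal(L/ℚ)) = P.ramificationIdx ℤ := by
  have hpp : (Ideal.span {(p : ℤ)}).IsPrime := (Ideal.span_singleton_prime (by exact_mod_cast hp.ne_zero)).mpr (Nat.prime_iff_prime_int.mp hp)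
  rw [Ideal.card_inertia_eq_ramificationIdxIn (Ideal.span {(p : ℤ)}) P,
    Ideal.ramificationIdxIn_eq_ramificationIdx (Ideal.span {(p : ℤ)}) P Gal(L/ℚ)]

lemma p_val (P : Ideal (𝓞 L)) [P.IsMaximal] (p : ℕ) (hp : p.Prime) [P.LiesOver (Ideal.span {(p : ℤ)})] :
    (p : 𝓞 L) ∈ P ^ (P.ramificationIdx ℤ) ∧ (p : 𝓞 L) ∉ P ^ (P.ramificationIdx ℤ + 1) := by
  have h0 := ne_bot_of_over P p hp
  have hm : (Ideal.span {(p : ℤ)}).map (algebraMap ℤ (𝓞 L)) = Ideal.span {(p : 𝓞 L)} := by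
    rw [Ideal.map_span]; simp
  have hne : Ideal.span {(p : 𝓞 L)} ≠ ⊥ := by
    rw [Ne, Ideal.span_singleton_eq_bot]; exact_mod_cast hp.ne_zero
  have h1 := Ideal.IsDedekindDomain.ramificationIdx_eq_multiplicity (Ideal.span {(p : ℤ)}) P (by rw [hm]; exact hne)
  rw [hm] at h1
  have hfin : FiniteMultiplicity P (Ideal.span {(p : 𝓞 L)}) := by
    apply FiniteMultiplicity.of_prime_left (Ideal.prime_of_isPrime h0 inferInstance) hne
  rw [h1]
  constructor
  · rw [← Ideal.dvd_span_singleton]; exact pow_multiplicity_dvd _ _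
  · rw [← Ideal.dvd_span_singleton]; exact hfin.not_pow_dvd_of_multiplicity_lt (Nat.lt_succ_self _)

lemma gg (N : Subgroup Gal(L/ℚ)) : IsGaloisGroup N (𝓞 (IntermediateField.fixedField N)) (𝓞 L) := by
  have : IsGaloisGroup N (IntermediateField.fixedField N) L := IsGaloisGroup.subgroup Gal(L/ℚ) ℚ L N
  have : SMulDistribClass N (𝓞 L) L := ⟨fun g x y => by 
     show g.1 • (x • y) = (g.1 • x) • (g.1 • y)
     exact smul_distrib_smul _ _ _⟩
  exact IsGaloisGroup.of_isFractionRing N (𝓞 (IntermediateField.fixedField N)) (𝓞 L) (IntermediateField.fixedField N) L 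

lemma exists_loc (hab : ∀ σ τ : Gal(L/ℚ), σ * τ = τ * σ) (P : Ideal (𝓞 L)) [P.IsMaximal] (p : ℕ) (hp : p.Prime)
    [P.LiesOver (Ideal.span {(p : ℤ)})] :
    ∃ x, Loc Gal(L/ℚ) P x p (Nat.card (P.inertia Gal(L/ℚ))) := by
  have h0 := ne_bot_of_over P p hp
  obtain ⟨x, hx, hx2⟩ : ∃ x, x ∈ P ∧ x ∉ P ^ 2 := by
    apply SetLike.exists_of_lt
    have := Ideal.pow_succ_lt_pow h0 1 
    simpa using this
  refine ⟨x, inferInstance, h0, hx, hx2, ?_, ?_, hab, hp, ?_, ?_, ?_, rfl, Nat.card_pos⟩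
  · let U : IntermediateField ℚ L := IntermediateField.fixedField (P.inertia Gal(L/ℚ))
    have : IsGaloisGroup (P.inertia Gal(L/ℚ)) (𝓞 U) (𝓞 L) := gg _
    have hq : P.under (𝓞 U) ≠ ⊥ := Ideal.under_ne_bot _ h0
    have : (P.under (𝓞 U)).IsMaximal := Ideal.IsMaximal.under _ P
    have : Finite (𝓞 U ⧸ P.under (𝓞 U)) := Ideal.finiteQuotientOfFreeOfNeBot _ hq
    exact F_mono (A := 𝓞 U) P (P.under (𝓞 U)) h0 hx hx2
  · intro c hc
    have hpp : (Ideal.span {(p : ℤ)}).IsMaximal := by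
      have : (Ideal.span {(p : ℤ)}).IsPrime := (Ideal.span_singleton_prime (by exact_mod_cast hp.ne_zero)).mpr (Nat.prime_iff_prime_int.mp hp)
      apply this.isMaximal
      rw [Ne, Ideal.span_singleton_eq_bot]; exact_mod_cast hp.ne_zero
    have : Finite (ℤ ⧸ Ideal.span {(p : ℤ)}) := by
      apply Ideal.finiteQuotientOfFreeOfNeBot
      rw [Ne, Ideal.span_singleton_eq_bot]; exact_mod_cast hp.ne_zero
    obtain ⟨a, ha⟩ := F_res (A := ℤ) (G := Gal(L/ℚ)) P (Ideal.span {(p : ℤ)}) c hc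
    have hpP : (p : 𝓞 L) ∈ P := by
      have h1 : (p : ℤ) ∈ P.under ℤ := by
        rw [← Ideal.over_def P (Ideal.span {(p : ℤ)})]
        exact Ideal.mem_span_singleton_self _
      simpa using h1
    refine ⟨(a % p).toNat, ?_⟩
    have h2 : (0 : ℤ) ≤ a % p := Int.emod_nonneg _ (by exact_mod_cast hp.ne_zero)
    have h3 : ((a % p).toNat : ℤ) = a % p := Int.toNat_of_nonneg h2
    have h4 : (((a % p).toNat : ℕ) : 𝓞 L) = ((a % p : ℤ) : 𝓞 L) := by exact_mod_cast congrArg (Int.cast : ℤ → 𝓞 L) h3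
    have h5 : (a : 𝓞 L) = (p : 𝓞 L) * ((a / p : ℤ) : 𝓞 L) + ((a % p : ℤ) : 𝓞 L) := by
      exact_mod_cast congrArg (Int.cast : ℤ → 𝓞 L) (Int.mul_ediv_add_emod a p).symm
    have h6 := add_mem ha (Ideal.mul_mem_right ((a / p : ℤ) : 𝓞 L) _ hpP)
    convert h6 using 1
    rw [h4, eq_intCast, h5]
    ring
  · rw [card_inertia P p hp]; exact (p_val P p hp).1
  · intro a z hz
    rw [card_inertia P p hp] at hz
    rcases valmul h0 (i := P.ramificationIdx ℤ) (j := a) (by convert hz using 2; ring) with h | h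
    · exact absurd h (p_val P p hp).2
    · exact h
  · intro s hs
    exact (IsGaloisGroup.faithful (G := Gal(L/ℚ)) (A := ℤ) (B := 𝓞 L)).eq_of_smul_eq_smul (fun y => by rw [hs, one_smul])

end G
end Ab


namespace Ab

section H
set_option linter.unusedSectionVars false
open scoped Pointwise

/-- valuations in extensions -/
lemma emul {K L : Type*} [Field K] [Field L] [NumberField K] [NumberField L] [Algebra K L]
    (P : Ideal (𝓞 L)) [P.IsMaximal] (h0 : P ≠ ⊥) (J : Ideal (𝓞 K)) (hJ : J ≠ ⊥) :
    emultiplicity P (J.map (algebraMap (𝓞 K) (𝓞 L))) =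
      (P.ramificationIdx (𝓞 K) : ℕ∞) * emultiplicity (P.under (𝓞 K)) J := by
  have h1 : P.under (𝓞 K) ≠ ⊥ := Ideal.under_ne_bot _ h0
  have := Ideal.IsDedekindDomain.emultiplicity_map_eq_ramificationIdx'_mul (R := 𝓞 K) (S := 𝓞 L)
    (v := P.under (𝓞 K)) (w := P) hJ (Ideal.prime_of_isPrime h1 inferInstance).irreducible
    (Ideal.prime_of_isPrime h0 inferInstance).irreducible h0
  rw [this, Ideal.ramificationIdx'_eq_ramificationIdx _ _ h1]

variable {L : Type*} [Field L] [NumberField L] [IsGalois ℚ L]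

lemma emul_le {K L : Type*} [Field K] [Field L] [NumberField K] [NumberField L] [Algebra K L]
    (P : Ideal (𝓞 L)) [P.IsMaximal] (h0 : P ≠ ⊥) (J : Ideal (𝓞 K)) (k : ℕ)
    (h : (P.under (𝓞 K)) ^ k ∣ J) :
    P ^ (k * P.ramificationIdx (𝓞 K)) ∣ (J.map (algebraMap (𝓞 K) (𝓞 L))) := by
  by_cases hJ : J = ⊥
  · subst hJ; rw [Ideal.map_bot]; exact dvd_zero _
  rw [pow_dvd_iff_le_emultiplicity, emul P h0 J hJ, mul_comm]
  have := pow_dvd_iff_le_emultiplicity.mp h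
  push_cast
  gcongr

lemma emul_mem {K L : Type*} [Field K] [Field L] [NumberField K] [NumberField L] [Algebra K L]
    (P : Ideal (𝓞 L)) [P.IsMaximal] (h0 : P ≠ ⊥) (z : 𝓞 K) (k : ℕ)
    (h : algebraMap (𝓞 K) (𝓞 L) z ∈ P ^ (k * P.ramificationIdx (𝓞 K) + 1)) :
    z ∈ (P.under (𝓞 K)) ^ (k + 1) := by
  by_cases hz : z = 0
  · subst hz; exact zero_mem _
  rw [← Ideal.dvd_span_singleton] at h ⊢
  have hm : (Ideal.span {z}).map (algebraMap (𝓞 K) (𝓞 L)) = Ideal.span {algebraMap (𝓞 K) (𝓞 L) z} := by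
    rw [Ideal.map_span]; simp
  rw [← hm, pow_dvd_iff_le_emultiplicity, emul P h0 _ (by simpa [Ideal.span_singleton_eq_bot] using hz)] at h
  by_contra hc
  rw [pow_dvd_iff_le_emultiplicity, not_le] at hc
  have h2 : emultiplicity (P.under (𝓞 K)) (Ideal.span {z}) ≤ k := by
    rw [← ENat.lt_add_one_iff (by simp)]; exact_mod_cast hc
  have h3 : (P.ramificationIdx (𝓞 K) : ℕ∞) * emultiplicity (P.under (𝓞 K)) (Ideal.span {z}) ≤ P.ramificationIdx (𝓞 K) * k := by gcongr
  have h4 := h.trans h3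
  rw [mul_comm] at h4
  have h5 : P.ramificationIdx (𝓞 K) * k + 1 ≤ P.ramificationIdx (𝓞 K) * k := by
    exact_mod_cast h4
  omega

/-- restriction to the fixed field -/
noncomputable def res (N : Subgroup Gal(L/ℚ)) [IsGalois ℚ (IntermediateField.fixedField N)] :
   Gal(L/ℚ) →* Gal(IntermediateField.fixedField N/ℚ) :=
   IsGaloisGroup.restrictHom Gal(L/ℚ) Gal(IntermediateField.fixedField N/ℚ) ℤ (𝓞 (IntermediateField.fixedField N)) (𝓞 L)

lemma isGal (hab : ∀ σ τ : Gal(L/ℚ), σ * τ = τ * σ) (N : Subgroup Gal(L/ℚ)) : IsGalois ℚ (IntermediateField.fixedField N) := by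
  have : N.Normal := ⟨fun n hn g => by rw [hab g n, mul_assoc, mul_inv_cancel, mul_one]; exact hn⟩
  exact IsGalois.of_fixedField_normal_subgroup N

section
variable (N : Subgroup Gal(L/ℚ)) [IsGalois ℚ (IntermediateField.fixedField N)]

local notation "K" => IntermediateField.fixedField N

lemma res_surj : Function.Surjective (res N) := IsGaloisGroup.restrictHom_surjective _ _ _ _ _

lemma res_smul (s : Gal(L/ℚ)) (z : 𝓞 K) :
    algebraMap (𝓞 K) (𝓞 L) (res N s • z) = s • algebraMap (𝓞 K) (𝓞 L) z := 
  IsGaloisGroup.algebraMap_restrictHom_smul _ _ _ _ _ _ _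

lemma hab_res (hab : ∀ σ τ : Gal(L/ℚ), σ * τ = τ * σ) : ∀ σ τ : Gal(K/ℚ), σ * τ = τ * σ := by
  intro σ τ
  obtain ⟨s, rfl⟩ := res_surj N σ
  obtain ⟨t, rfl⟩ := res_surj N τ
  rw [← map_mul, hab, map_mul]

lemma faith (s : Gal(L/ℚ)) (hs : ∀ y : 𝓞 L, s • y = y) : s = 1 :=
  (IsGaloisGroup.faithful (G := Gal(L/ℚ)) (A := ℤ) (B := 𝓞 L)).eq_of_smul_eq_smul (fun y => by rw [hs, one_smul])

lemma smul_of_mem (s : Gal(L/ℚ)) (hs : s ∈ N) (z : 𝓞 K) : s • algebraMap (𝓞 K) (𝓞 L) z = algebraMap (𝓞 K) (𝓞 L) z := by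
  have := (gg N).commutes
  have h := smul_algebraMap (⟨s, hs⟩ : N) z (A := 𝓞 L)
  exact h

lemma res_ker (s : Gal(L/ℚ)) : res N s = 1 ↔ s ∈ N := by
  have hle : N ≤ (res N).ker := by
    intro s hs
    rw [MonoidHom.mem_ker]
    apply faith
    intro z
    apply FaithfulSMul.algebraMap_injective (𝓞 K) (𝓞 L)
    rw [res_smul, smul_of_mem N s hs]
  have hc : Nat.card (res N).ker ≤ Nat.card N := by
    have h1 := Subgroup.card_mul_index (res N).ker
    have h2 : (res N).ker.index = Nat.card Gal(K/ℚ) := by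
      rw [Subgroup.index_ker, MonoidHom.range_eq_top.mpr (res_surj N), Subgroup.card_top]
    rw [h2, IsGalois.card_aut_eq_finrank, IsGalois.card_aut_eq_finrank] at h1
    have h3 := Module.finrank_mul_finrank ℚ K L
    rw [IntermediateField.finrank_fixedField_eq_card] at h3
    have h4 : 0 < Module.finrank ℚ K := Module.finrank_pos
    rw [mul_comm] at h1
    exact (Nat.eq_of_mul_eq_mul_left h4 (h1.trans h3.symm)).le
  have := Subgroup.eq_of_le_of_card_ge hle hc
  rw [← MonoidHom.mem_ker, ← this]

variable (P : Ideal (𝓞 L)) [P.IsMaximal] (p : ℕ) (hp : p.Prime) [P.LiesOver (Ideal.span {(p : ℤ)})]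

lemma under_over : (P.under (𝓞 K)).LiesOver (Ideal.span {(p : ℤ)}) := by
  have : P.LiesOver (P.under (𝓞 K)) := inferInstance
  exact Ideal.LiesOver.tower_bot P (P.under (𝓞 K)) (Ideal.span {(p : ℤ)})

include hp in
lemma ram_eq (hN : N ≤ P.inertia Gal(L/ℚ)) : P.ramificationIdx (𝓞 K) = Nat.card N := by
  have := gg N
  have h0 := ne_bot_of_over P p hp
  have hq : P.under (𝓞 K) ≠ ⊥ := Ideal.under_ne_bot _ h0
  have : (P.under (𝓞 K)).IsMaximal := Ideal.IsMaximal.under _ P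
  have h1 := Ideal.card_inertia_eq_ramificationIdxIn (G := N) (P.under (𝓞 K)) P
  rw [Ideal.ramificationIdxIn_eq_ramificationIdx (P.under (𝓞 K)) P N] at h1
  have h2 : P.inertia N = ⊤ := by
    rw [eq_top_iff]
    intro s _ y
    exact hN s.2 y
  rw [h2, Subgroup.card_top] at h1
  exact h1.symm

include hp in
lemma card_res (hN : N ≤ P.inertia Gal(L/ℚ)) :
    Nat.card ((P.under (𝓞 K)).inertia Gal(K/ℚ)) * Nat.card N = Nat.card (P.inertia Gal(L/ℚ)) := by
  have := under_over N P p
  rw [← ram_eq N P p hp hN, card_inertia P p hp, card_inertia (P.under (𝓞 K)) p hp]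
  exact (Ideal.ramificationIdx_tower _ _ ).symm

lemma res_inertia_mem {s : Gal(L/ℚ)} (hs : s ∈ P.inertia Gal(L/ℚ)) : res N s ∈ (P.under (𝓞 K)).inertia Gal(K/ℚ) := by
  intro y
  show _ ∈ Ideal.comap _ P
  rw [Ideal.mem_comap, map_sub, res_smul]
  exact hs _

include hp in
lemma res_inertia (hN : N ≤ P.inertia Gal(L/ℚ)) :
    (P.inertia Gal(L/ℚ)).map (res N) = (P.under (𝓞 K)).inertia Gal(K/ℚ) := by
  apply Subgroup.eq_of_le_of_card_ge
  · rintro _ ⟨s, hs, rfl⟩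
    exact res_inertia_mem N P hs
  · have h1 := card_res N P p hp hN
    have h2 := Subgroup.card_mul_index (((res N).ker).subgroupOf (P.inertia Gal(L/ℚ)))
    have h3 : (res N).ker = N := by ext s; rw [MonoidHom.mem_ker, res_ker]
    have h4 : Nat.card (((res N).ker).subgroupOf (P.inertia Gal(L/ℚ))) = Nat.card N := by
      rw [h3]; exact Nat.card_congr (Subgroup.subgroupOfEquivOfLe hN).toEquiv
    have h5 : (((res N).ker).subgroupOf (P.inertia Gal(L/ℚ))).index = Nat.card ((P.inertia Gal(L/ℚ)).map (res N)) := by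
      have := Subgroup.index_ker ((res N).comp (P.inertia Gal(L/ℚ)).subtype)
      rw [MonoidHom.range_comp, Subgroup.range_subtype] at this
      rw [← this]; rfl
    rw [h4, h5, ← h1, mul_comm] at h2
    exact (Nat.eq_of_mul_eq_mul_right Nat.card_pos h2).ge

end
end H
end Ab


namespace Ab

section I
set_option linter.unusedSectionVars false
open scoped Pointwise

variable {L : Type*} [Field L] [NumberField L] [IsGalois ℚ L]

lemma QH_holds (hab : ∀ σ τ : Gal(L/ℚ), σ * τ = τ * σ) (P : Ideal (𝓞 L)) [P.IsMaximal] (p : ℕ) (hp : p.Prime)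
    [P.LiesOver (Ideal.span {(p : ℤ)})] : QH Gal(L/ℚ) P p := by
  intro H hH hc σ hσ hσH
  have := isGal hab H
  have hab' := hab_res H hab
  have := under_over H P p
  set K := IntermediateField.fixedField H with hK
  have hmax : (P.under (𝓞 K)).IsMaximal := Ideal.IsMaximal.under _ P
  have hcard := card_res H P p hp hH
  have hcp : Nat.card ((P.under (𝓞 K)).inertia Gal(K/ℚ)) = p := by
    rw [← hc, mul_comm] at hcard
    exact Nat.eq_of_mul_eq_mul_left Nat.card_pos hcard
  obtain ⟨x, D⟩ := exists_loc hab' (P.under (𝓞 K)) p hp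
  rw [hcp] at D
  have hmem := res_inertia_mem H P hσ
  have hpow : (res H σ) ^ p = 1 := by
    have h1 := pow_card_eq_one' (x := (⟨res H σ, hmem⟩ : (P.under (𝓞 K)).inertia Gal(K/ℚ)))
    rw [hcp] at h1
    simpa using congrArg Subtype.val h1
  set c := (if p = 2 then 3 else 2) with hcdef
  have hnot : res H σ ∉ ((P.under (𝓞 K)) ^ (c + 1)).inertia Gal(K/ℚ) := by
    intro hs
    apply hσH
    rw [← res_ker H]
    apply faith
    intro y
    have := D.prime
    have h2 := A5 hp D.hpe D.hpe' hs (by rw [hcdef]; split_ifs <;> omega) (by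
      have := hp.two_le
      rw [hcdef]; split_ifs with h
      · subst h; omega
      · omega) hpow y
    exact sub_eq_zero.mp (eq_zero_of_mem_pows D h2)
  have : ∃ z : 𝓞 K, res H σ • z - z ∉ (P.under (𝓞 K)) ^ (c + 1) := by
    by_contra! h
    exact hnot h
  obtain ⟨z, hz⟩ := this
  refine ⟨algebraMap (𝓞 K) (𝓞 L) z, fun h hh => smul_of_mem H h hh z, fun h => hz ?_⟩
  rw [← res_smul, ← map_sub, ← ram_eq H P p hp hH] at h
  exact emul_mem P (ne_bot_of_over P p hp) _ c h

open nonZeroDivisors in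
lemma diff_le {K L : Type*} [Field K] [Field L] [NumberField K] [NumberField L] [Algebra K L]
    (J : Ideal (𝓞 K)) (hJ : J ≠ ⊥) (h : ∀ x : 𝓞 L, Algebra.intTrace (𝓞 K) (𝓞 L) x ∈ J) :
    differentIdeal (𝓞 K) (𝓞 L) ≤ J.map (algebraMap (𝓞 K) (𝓞 L)) := by
  have hp' : J.map (algebraMap (𝓞 K) (𝓞 L)) ≠ ⊥ := (Ideal.map_eq_bot_iff_of_injective
    (FaithfulSMul.algebraMap_injective (𝓞 K) (𝓞 L))).not.mpr hJ
  rw [differentialIdeal_le_iff (K := K) (L := L) hp', Submodule.map_le_iff_le_comap]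
  intro x hx
  rw [Submodule.restrictScalars_mem, FractionalIdeal.mem_coe, 
      FractionalIdeal.mem_inv_iff (by simpa using hp')] at hx
  rw [Submodule.mem_comap, LinearMap.coe_restrictScalars, ← FractionalIdeal.coe_one,
      ← div_self (G₀ := FractionalIdeal (𝓞 K)⁰ K) (a := J) (by simpa using hJ),
      FractionalIdeal.mem_coe, FractionalIdeal.mem_div_iff_of_ne_zero (by simpa using hJ)]
  simp only [FractionalIdeal.mem_coeIdeal, forall_exists_index, and_imp,
      forall_apply_eq_imp_iff₂] at hx
  intro y hy'
  obtain ⟨y, hy, rfl : algebraMap (𝓞 K) K _ = _⟩ := (FractionalIdeal.mem_coeIdeal _).mp hy'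
  obtain ⟨z, hz'⟩ := (FractionalIdeal.mem_one_iff _).mp (hx _ (Ideal.mem_map_of_mem _ hy))
  have : Algebra.trace K L (algebraMap (𝓞 L) L z) ∈ (J : FractionalIdeal (𝓞 K)⁰ K) := by
      rw [← Algebra.algebraMap_intTrace (A := 𝓞 K)]
      exact ⟨Algebra.intTrace (𝓞 K) (𝓞 L) z, h z, rfl⟩
  rwa [mul_comm, ← smul_eq_mul, ← map_smul, Algebra.smul_def, mul_comm,
      ← IsScalarTower.algebraMap_apply, IsScalarTower.algebraMap_apply (𝓞 K) (𝓞 L) L, ← hz']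

lemma trace_sum (h : Gal(L/ℚ)) (p : ℕ) (ho : orderOf h = p) (x : 𝓞 L) :
    algebraMap (𝓞 (IntermediateField.fixedField (Subgroup.zpowers h))) (𝓞 L)
      (Algebra.intTrace (𝓞 (IntermediateField.fixedField (Subgroup.zpowers h))) (𝓞 L) x) =
     ∑ j ∈ Finset.range p, h ^ j • x := by
  set N := Subgroup.zpowers h with hN
  set K := IntermediateField.fixedField N
  have hG : IsGaloisGroup N K L := IsGaloisGroup.subgroup Gal(L/ℚ) ℚ L N
  apply FaithfulSMul.algebraMap_injective (𝓞 L) L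
  rw [← IsScalarTower.algebraMap_apply, IsScalarTower.algebraMap_apply (𝓞 K) K L,
    Algebra.algebraMap_intTrace (A := 𝓞 K) (K := K) (L := L)]
  have : IsGalois K L := IsGaloisGroup.isGalois N K L
  rw [trace_eq_sum_automorphisms, map_sum]
  have := Fintype.ofFinite N
  rw [← Equiv.sum_comp (IsGaloisGroup.mulEquivAlgEquiv N K L).toEquiv]
  have e : Fin p ≃ N := (finCongr ho.symm).trans (finEquivZPowers (isOfFinOrder_of_finite h))
  rw [← Equiv.sum_comp ((finCongr ho.symm).trans (finEquivZPowers (isOfFinOrder_of_finite h))), Finset.sum_range]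
  rfl

end I
end Ab


namespace Ab

universe u
section J
set_option linter.unusedSectionVars false
open scoped Pointwise

lemma span_max (p : ℕ) (hp : p.Prime) : (Ideal.span {(p : ℤ)}).IsMaximal := by
  have : (Ideal.span {(p : ℤ)}).IsPrime := (Ideal.span_singleton_prime (by exact_mod_cast hp.ne_zero)).mpr (Nat.prime_iff_prime_int.mp hp)
  apply this.isMaximal
  rw [Ne, Ideal.span_singleton_eq_bot]; exact_mod_cast hp.ne_zero

lemma tame_diff {L : Type*} [Field L] [NumberField L] [IsGalois ℚ L] (P : Ideal (𝓞 L)) [P.IsMaximal] (p : ℕ)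
    (hp : p.Prime) [P.LiesOver (Ideal.span {(p : ℤ)})] :
    P ^ (Nat.card (P.inertia Gal(L/ℚ)) - 1) ∣ differentIdeal ℤ (𝓞 L) := by
  have := span_max p hp
  refine pow_sub_one_dvd_differentIdeal ℤ P (p := Ideal.span {(p : ℤ)}) _ ?_ ?_
  · rw [Ne, Ideal.span_singleton_eq_bot]; exact_mod_cast hp.ne_zero
  · have hm : (Ideal.span {(p : ℤ)}).map (algebraMap ℤ (𝓞 L)) = Ideal.span {(p : 𝓞 L)} := by
      rw [Ideal.map_span]; simp
    rw [hm, Ideal.dvd_span_singleton, card_inertia P p hp]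
    exact (p_val P p hp).1

lemma C5 (p : ℕ) (hp : p.Prime) (b : ℕ) : ∀ (L : Type u) [Field L] [NumberField L] [IsGalois ℚ L]
    (_ : ∀ σ τ : Gal(L/ℚ), σ * τ = τ * σ) (P : Ideal (𝓞 L)) [P.IsMaximal]
    [P.LiesOver (Ideal.span {(p : ℤ)})] (g : Gal(L/ℚ)) (_ : g ∈ P.inertia Gal(L/ℚ))
    (_ : ∀ u ∈ P.inertia Gal(L/ℚ), ∃ k : ℕ, u = g ^ k) (_ : Nat.card (P.inertia Gal(L/ℚ)) = p ^ b),
    P ^ (b * ((p - 1) * p ^ (b - 1))) ∣ differentIdeal ℤ (𝓞 L) := by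
  induction b with
  | zero => intros; simp
  | succ b ih =>
    intro L _ _ _ hab P _ _ g hg hgen hc
    rcases Nat.eq_zero_or_pos b with rfl | hb
    · have := tame_diff P p hp
      rw [hc] at this
      simpa using this
    obtain ⟨b, rfl⟩ : ∃ c, b = c + 1 := ⟨b - 1, by omega⟩
    have h0 := ne_bot_of_over P p hp
    obtain ⟨x, D⟩ := exists_loc hab P p hp
    rw [hc] at D
    have hIz : P.inertia Gal(L/ℚ) = Subgroup.zpowers g := by
      apply le_antisymm
      · intro u hu
        obtain ⟨k, rfl⟩ := hgen u hu
        exact Subgroup.npow_mem_zpowers g k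
      · rw [Subgroup.zpowers_le]; exact hg
    have hog : orderOf g = p ^ (b + 2) := by
      rw [← Nat.card_zpowers, ← hIz, hc]
    have hw : P.inertia Gal(L/ℚ) ≤ (P ^ 2).inertia Gal(L/ℚ) := by
      apply wild_of_pgroup D
      refine ⟨b + 2, fun s hs => ?_⟩
      obtain ⟨k, rfl⟩ := hgen s hs
      rw [← pow_mul, mul_comm, pow_mul, ← hog, pow_orderOf_eq_one, one_pow]
    have hj : ∀ j, j ≤ b + 1 → g ^ (p ^ j) ∈ (P ^ (p ^ j + 1)).inertia Gal(L/ℚ) := by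
      intro j
      induction j with
      | zero => intro _; simpa using hw hg
      | succ j ihj =>
        intro hjb
        rw [show g ^ (p ^ (j + 1)) = (g ^ (p ^ j)) ^ p by rw [pow_succ, pow_mul]]
        have h1 : p ^ (j + 1) ≤ p ^ (b + 1 + 1) := Nat.pow_le_pow_right hp.pos (by omega)
        refine A3 hp D.hpe (ihj (by omega)) (le_of_eq (mul_comm _ _)) ?_
        exact h1.trans (Nat.le_add_left _ _)
    set h := g ^ (p ^ (b + 1)) with hh
    have hoh : orderOf h = p := by
      rw [hh, orderOf_pow' _ (pow_ne_zero _ hp.ne_zero), hog, Nat.gcd_eq_right (pow_dvd_pow _ (by omega)),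
        Nat.pow_div (by omega) hp.pos]
      simp
    have hN : Subgroup.zpowers h ≤ P.inertia Gal(L/ℚ) := by
      rw [Subgroup.zpowers_le]; exact pow_mem hg _
    have hcN : Nat.card (Subgroup.zpowers h) = p := by rw [Nat.card_zpowers, hoh]
    have := isGal hab (Subgroup.zpowers h)
    have hab' := hab_res (Subgroup.zpowers h) hab
    have := under_over (Subgroup.zpowers h) P p
    have htr := trace_sum h p hoh
    have hcard := card_res (Subgroup.zpowers h) P p hp hN
    have hram := ram_eq (Subgroup.zpowers h) P p hp hN
    have hri := res_inertia (Subgroup.zpowers h) P p hp hN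
    have hgm := res_inertia_mem (Subgroup.zpowers h) P hg
    rw [hcN] at hcard hram
    set K := IntermediateField.fixedField (Subgroup.zpowers h) with hK
    have hmax : (P.under (𝓞 K)).IsMaximal := Ideal.IsMaximal.under _ P
    have hcp : Nat.card ((P.under (𝓞 K)).inertia Gal(K/ℚ)) = p ^ (b + 1) := by
      rw [hc, pow_succ] at hcard
      exact Nat.eq_of_mul_eq_mul_right hp.pos hcard
    have IH := ih K hab' (P.under (𝓞 K)) (res (Subgroup.zpowers h) g) hgm (by
      intro u hu
      rw [← hri] at hu
      obtain ⟨s, hs, rfl⟩ := hu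
      obtain ⟨k, rfl⟩ := hgen s hs
      exact ⟨k, map_pow _ _ _⟩) hcp
    have h1 := emul_le P h0 _ _ IH
    have hpos : 0 < (p - 1) * p ^ b := Nat.mul_pos (by have := hp.two_le; omega) (pow_pos hp.pos _)
    have h2 : differentIdeal (𝓞 K) (𝓞 L) ≤ ((P.under (𝓞 K)) ^ ((p - 1) * p ^ b)).map (algebraMap (𝓞 K) (𝓞 L)) := by
      apply diff_le _ (pow_ne_zero _ (Ideal.under_ne_bot _ h0))
      intro y
      obtain ⟨w, hw⟩ : ∃ w, (p - 1) * p ^ b = w + 1 := ⟨(p - 1) * p ^ b - 1, by omega⟩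
      rw [hw]
      apply emul_mem P h0
      rw [htr, hram]
      have hle : (p - 1) * p ^ (b + 1) = (w + 1) * p := by rw [← hw, pow_succ]; ring
      refine Ideal.pow_le_pow_right ?_ (geom_mem hp D.hpe (hj (b + 1) le_rfl) (k := 0) (w := (p - 1) * p ^ (b + 1)) y (by simp) (by omega) ?_)
      · rw [hle, Nat.add_mul]; have := hp.two_le; omega
      · rw [zero_add, pow_succ p (b + 1), mul_comm (p ^ (b + 1))]
        exact Nat.mul_le_mul_right _ (Nat.sub_le _ _)
    have h3 := emul_le P h0 _ _ (dvd_refl ((P.under (𝓞 K)) ^ ((p - 1) * p ^ b)))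
    have h4 := h3.trans (Ideal.dvd_iff_le.mpr h2)
    have h5 := mul_dvd_mul h4 h1
    rw [← differentIdeal_eq_differentIdeal_mul_differentIdeal ℤ (𝓞 K) (𝓞 L), ← pow_add, hram] at h5
    convert h5 using 2
    simp only [Nat.add_sub_cancel]
    rw [pow_succ]
    ring

end J
end Ab


namespace Ab
universe u
section K
set_option linter.unusedSectionVars false
open scoped Pointwise

section
variable {L : Type*} [Field L] [NumberField L] [IsGalois ℚ L]

lemma inertia_eq (hab : ∀ σ τ : Gal(L/ℚ), σ * τ = τ * σ) (P Q : Ideal (𝓞 L)) [P.IsMaximal] [Q.IsMaximal]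
    (p : ℕ) (hp : p.Prime)
    [P.LiesOver (Ideal.span {(p : ℤ)})] [Q.LiesOver (Ideal.span {(p : ℤ)})] :
    P.inertia Gal(L/ℚ) = Q.inertia Gal(L/ℚ) := by
  have key : ∀ (P : Ideal (𝓞 L)) (σ : Gal(L/ℚ)), P.inertia Gal(L/ℚ) ≤ (σ • P).inertia Gal(L/ℚ) := by
    intro P σ s hs y
    have h1 := hs (σ⁻¹ • y)
    have h2 : s • y - y = σ • (s • σ⁻¹ • y - σ⁻¹ • y) := by
      rw [smul_sub, smul_inv_smul, ← mul_smul σ s, hab σ s, mul_smul, smul_inv_smul]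
    show s • y - y ∈ σ • P
    rw [h2]
    exact Ideal.smul_mem_pointwise_smul _ _ _ h1
  have := span_max p hp
  obtain ⟨σ, rfl⟩ := Ideal.exists_smul_eq_of_isGaloisGroup (Ideal.span {(p : ℤ)}) P Q Gal(L/ℚ)
  refine le_antisymm (key P σ) ?_
  have := key (σ • P) σ⁻¹
  rwa [inv_smul_smul] at this

lemma disc_dvd (p : ℕ) (hp : p.Prime) (e m : ℕ)
    (h : ∀ (P : Ideal (𝓞 L)) [P.IsMaximal] [P.LiesOver (Ideal.span {(p : ℤ)})],
      Nat.card (P.inertia Gal(L/ℚ)) = e ∧ P ^ m ∣ differentIdeal ℤ (𝓞 L)) :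
    p ^ (m * Module.finrank ℚ L) ∣ (discr L).natAbs ^ e := by
  have hne : Ideal.span {(p : 𝓞 L)} ≠ ⊥ := by
    rw [Ne, Ideal.span_singleton_eq_bot]; exact_mod_cast hp.ne_zero
  have h1 : Ideal.span {(p : 𝓞 L)} ^ m ∣ differentIdeal ℤ (𝓞 L) ^ e := by
    rw [UniqueFactorizationMonoid.dvd_iff_emultiplicity_le (pow_ne_zero _ hne)]
    intro P hP
    have hPp : P.IsPrime := Ideal.isPrime_of_prime hP
    have hPm : P.IsMaximal := hPp.isMaximal hP.ne_zero
    rw [emultiplicity_pow hP, emultiplicity_pow hP]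
    by_cases hpP : (p : 𝓞 L) ∈ P
    · have hover : P.LiesOver (Ideal.span {(p : ℤ)}) := by
        constructor
        apply (span_max p hp).eq_of_le (Ideal.IsPrime.under ℤ P).ne_top
        rw [Ideal.span_singleton_le_iff_mem]
        simpa using hpP
      obtain ⟨h2, h3⟩ := h P
      rw [pow_dvd_iff_le_emultiplicity] at h3
      have h4 : emultiplicity P (Ideal.span {(p : 𝓞 L)}) = e := by
        rw [card_inertia P p hp] at h2
        rw [← h2, emultiplicity_eq_coe]
        rw [Ideal.dvd_span_singleton, Ideal.dvd_span_singleton]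
        exact p_val P p hp
      rw [h4, mul_comm]
      gcongr
    · rw [emultiplicity_eq_zero.mpr (by rwa [Ideal.dvd_span_singleton]), mul_zero]
      exact zero_le
  have h2 := map_dvd Ideal.absNorm h1
  rw [map_pow, map_pow, NumberField.absNorm_differentIdeal L, Ideal.absNorm_span_natCast, ← pow_mul,
    RingOfIntegers.rank] at h2
  rwa [mul_comm]

lemma disc_val (p : ℕ) (hp : p.Prime) (e m : ℕ)
    (h : ∀ (P : Ideal (𝓞 L)) [P.IsMaximal] [P.LiesOver (Ideal.span {(p : ℤ)})],
      Nat.card (P.inertia Gal(L/ℚ)) = e ∧ P ^ m ∣ differentIdeal ℤ (𝓞 L)) :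
    m * Module.finrank ℚ L ≤ e * padicValNat p (discr L).natAbs := by
  have := Fact.mk hp
  have h1 := disc_dvd p hp e m h
  have h0 : (discr L).natAbs ≠ 0 := by simpa using discr_ne_zero L
  rw [padicValNat_dvd_iff_le (pow_ne_zero _ h0), padicValNat.pow] at h1
  exact h1
end

lemma disc_trans {K L : Type*} [Field K] [Field L] [NumberField K] [NumberField L] [Algebra K L]
    (p : ℕ) (hp : p.Prime) (e m : ℕ)
    (h : m * Module.finrank ℚ K ≤ e * padicValNat p (discr K).natAbs) :
    m * Module.finrank ℚ L ≤ e * padicValNat p (discr L).natAbs := by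
  have := Fact.mk hp
  have h0 : (discr L).natAbs ≠ 0 := by simpa using discr_ne_zero L
  have h0' : (discr K).natAbs ≠ 0 := by simpa using discr_ne_zero K
  have h1 : (discr K).natAbs ^ Module.finrank K L ∣ (discr L).natAbs := by
    rw [natAbs_discr_eq_absNorm_differentIdeal_mul_natAbs_discr_pow K (𝓞 K) L (𝓞 L)]
    exact dvd_mul_left _ _
  have h2 : Module.finrank K L * padicValNat p (discr K).natAbs ≤ padicValNat p (discr L).natAbs := by
    rw [← padicValNat.pow, ← padicValNat_dvd_iff_le h0]
    exact pow_padicValNat_dvd.trans h1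
  rw [← Module.finrank_mul_finrank ℚ K L]
  calc m * (Module.finrank ℚ K * Module.finrank K L) = Module.finrank K L * (m * Module.finrank ℚ K) := by ring
    _ ≤ Module.finrank K L * (e * padicValNat p (discr K).natAbs) := by gcongr
    _ = e * (Module.finrank K L * padicValNat p (discr K).natAbs) := by ring
    _ ≤ _ := by gcongr

end K
end Ab


namespace Ab
universe u
section L
set_option linter.unusedSectionVars false
open scoped Pointwise

lemma fin_tame {p e n c : ℕ} (he : 0 < e) (hep : e ≤ p) (h : (e - 1) * n ≤ e * c) :
    e ^ n ≤ p ^ (4 * c) := by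
  rcases Nat.eq_or_lt_of_le (Nat.succ_le_of_lt he) with h1 | h1
  · rw [← h1]; simp; exact Nat.one_le_pow _ _ (by omega)
  · calc e ^ n ≤ p ^ n := Nat.pow_le_pow_left hep n
      _ ≤ p ^ (4 * c) := by
        apply Nat.pow_le_pow_right (by omega)
        obtain ⟨f, rfl⟩ : ∃ f, e = f + 1 := ⟨e - 1, by omega⟩
        simp only [Nat.add_sub_cancel, Nat.succ_eq_add_one] at h h1
        have : (f + 1) * n ≤ (f + 1) * (4 * c) := by nlinarith
        exact Nat.le_of_mul_le_mul_left this (by omega)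

lemma fin_wild {p b e n c : ℕ} (hp : p.Prime) (hb : 1 ≤ b) (h : b * ((p - 1) * p ^ (b - 1)) * n ≤ p ^ b * c)
    (he : e ≤ p ^ (2 * b)) : e ^ n ≤ p ^ (4 * c) := by
  obtain ⟨b, rfl⟩ : ∃ f, b = f + 1 := ⟨b - 1, by omega⟩
  obtain ⟨q, rfl⟩ : ∃ f, p = f + 1 := ⟨p - 1, by have := hp.two_le; omega⟩
  have hq : 1 ≤ q := by have := hp.two_le; omega
  simp only [Nat.add_sub_cancel] at h
  have h1 : (b + 1) * q * n ≤ (q + 1) * c := by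
    have h2 : (q + 1) ^ b * ((b + 1) * q * n) ≤ (q + 1) ^ b * ((q + 1) * c) := by
      calc _ = (b + 1) * (q * (q + 1) ^ b) * n := by ring
        _ ≤ _ := h
        _ = _ := by rw [pow_succ]; ring
    exact Nat.le_of_mul_le_mul_left h2 (by positivity)
  have h2 : (b + 1) * n ≤ 2 * c := by
    have : q * ((b + 1) * n) ≤ q * (2 * c) := by nlinarith
    exact Nat.le_of_mul_le_mul_left this hq
  calc e ^ n ≤ ((q + 1) ^ (2 * (b + 1))) ^ n := Nat.pow_le_pow_left he n
    _ = (q + 1) ^ (2 * ((b + 1) * n)) := by rw [← pow_mul]; ring_nf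
    _ ≤ _ := Nat.pow_le_pow_right (by omega) (by omega)

lemma key (L : Type u) [Field L] [NumberField L] [IsGalois ℚ L]
    (hab : ∀ σ τ : Gal(L/ℚ), σ * τ = τ * σ) (P : Ideal (𝓞 L)) [P.IsMaximal] (p : ℕ) (hp : p.Prime)
    [P.LiesOver (Ideal.span {(p : ℤ)})] :
    Nat.card (P.inertia Gal(L/ℚ)) ^ Module.finrank ℚ L ≤ p ^ (4 * padicValNat p (discr L).natAbs) := by
  obtain ⟨x, D⟩ := exists_loc hab P p hp
  have hCle := tame_le D
  have hCcard := card_tame D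
  obtain ⟨k, hk⟩ := pow_mem_tame D
  set C := tame D with hC
  have := isGal hab C
  have hab1 := hab_res C hab
  have := under_over C P p
  have hcard1 := card_res C P p hp hCle
  have hri1 := res_inertia C P p hp hCle
  have hker1 := res_ker C
  have hmax : (P.under (𝓞 (IntermediateField.fixedField C))).IsMaximal := Ideal.IsMaximal.under _ P
  have htr : ∀ e m, _ → _ := disc_trans (K := IntermediateField.fixedField C) (L := L) p hp
  set P1 := P.under (𝓞 (IntermediateField.fixedField C)) with hP1
  have hI1 : ∃ a, Nat.card (P1.inertia Gal(IntermediateField.fixedField C/ℚ)) = p ^ a := by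
    have := Fact.mk hp
    rw [← IsPGroup.iff_card]
    intro u
    refine ⟨k, ?_⟩
    have hu : (u : Gal(IntermediateField.fixedField C/ℚ)) ∈ (P.inertia Gal(L/ℚ)).map (res C) := by
      rw [hri1]; exact u.2
    obtain ⟨s, hs, hsu⟩ := hu
    ext1
    rw [Subgroup.coe_pow, ← hsu, ← map_pow]
    exact (hker1 _).mpr (hk s hs)
  have hq := QH_holds hab1 P1 p hp
  obtain ⟨x1, D1⟩ := exists_loc hab1 P1 p hp
  obtain ⟨s, hs, t, ht, hst, htp⟩ := E6 D1 hI1 hq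
  obtain ⟨N, hN, ⟨g, hg, hgN⟩, b, hb1, hb2, hb3⟩ := E7 hab1 hp _ hI1 hs ht hst
  rcases Nat.eq_zero_or_pos b with rfl | hb
  · have h1 : Nat.card (P.inertia Gal(L/ℚ)) ≤ p - 1 := by
      rw [← hcard1]
      calc _ ≤ 1 * (p - 1) := Nat.mul_le_mul (by simpa using hb2) hCcard
        _ = _ := one_mul _
    refine fin_tame Nat.card_pos (h1.trans (Nat.sub_le _ _)) (disc_val p hp _ _ ?_)
    intro Q _ _
    exact ⟨by rw [inertia_eq hab P Q p hp], by rw [inertia_eq hab P Q p hp]; exact tame_diff Q p hp⟩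
  · have := isGal hab1 N
    have hab2 := hab_res N hab1
    have := under_over N P1 p
    have hcard2 := card_res N P1 p hp hN
    have hri2 := res_inertia N P1 p hp hN
    have hker2 := res_ker N
    have hmax2 : (P1.under (𝓞 (IntermediateField.fixedField N))).IsMaximal := Ideal.IsMaximal.under _ P1
    have hgm := res_inertia_mem N P1 hg
    have hc2 : Nat.card ((P1.under (𝓞 (IntermediateField.fixedField N))).inertia Gal(IntermediateField.fixedField N/ℚ)) = p ^ b := by
      rw [hb1, mul_comm] at hcard2
      exact Nat.eq_of_mul_eq_mul_left Nat.card_pos hcard2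
    have hdv := disc_val (L := IntermediateField.fixedField N) p hp (p ^ b) (b * ((p - 1) * p ^ (b - 1))) (by
      intro Q _ _
      have he := inertia_eq hab2 (P1.under (𝓞 (IntermediateField.fixedField N))) Q p hp
      rw [← he]
      refine ⟨hc2, C5 p hp b _ hab2 Q (res N g) (by rw [← he]; exact hgm) ?_ (by rw [← he]; exact hc2)⟩
      intro u hu
      rw [← he, ← hri2] at hu
      obtain ⟨v, hv, rfl⟩ := hu
      obtain ⟨j, hj⟩ := hgN v hv
      refine ⟨j, ?_⟩
      have := (hker2 _).mpr hj
      rw [map_mul, map_inv, map_pow, mul_inv_eq_one] at this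
      exact this)
    have h2 := htr _ _ (disc_trans p hp _ _ hdv)
    refine fin_wild hp hb h2 ?_
    rw [← hcard1]
    by_cases hp2 : p = 2
    · calc _ ≤ (p ^ b * p ^ b) * 1 := Nat.mul_le_mul hb2 (by rw [hp2] at hCcard; simpa using hCcard)
        _ = _ := by ring
    · calc _ ≤ p ^ b * p := Nat.mul_le_mul (hb3 (htp hp2)) (hCcard.trans (Nat.sub_le _ _))
        _ = p ^ (b + 1) := by ring
        _ ≤ _ := Nat.pow_le_pow_right hp.pos (by omega)

end L
end Ab


namespace Ab
universe u
section M
set_option linter.unusedSectionVars false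
open scoped Pointwise
variable {L : Type*} [Field L] [NumberField L] [IsGalois ℚ L]

lemma exists_p {K : Type*} [Field K] [NumberField K] (P : Ideal (𝓞 K)) [P.IsMaximal] :
    ∃ p : ℕ, p.Prime ∧ P.LiesOver (Ideal.span {(p : ℤ)}) := by
  obtain ⟨p, hp⟩ := IsPrincipalIdealRing.principal (P.under ℤ)
  have hp : P.under ℤ = Ideal.span {p} := hp
  have hp0 : p ≠ 0 := fun hp0 ↦ Ideal.IsMaximal.ne_bot_of_isIntegral_int P
    (Ideal.eq_bot_of_comap_eq_bot (hp.trans (by aesop)))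
  have h1 : Prime p := by rw [← Ideal.span_singleton_prime hp0, ← hp]; infer_instance
  refine ⟨p.natAbs, Int.prime_iff_natAbs_prime.mp h1, ⟨?_⟩⟩
  rw [hp, Int.span_natAbs]

lemma no_unram (H : Subgroup Gal(L/ℚ))
    (hH : ∀ (Q : Ideal (𝓞 L)) [Q.IsMaximal], Q.inertia Gal(L/ℚ) ≤ H) : H = ⊤ := by
  have h1 : Module.finrank ℚ (IntermediateField.fixedField H) = 1 := by
    by_contra hne
    obtain ⟨P, hP, hun⟩ := NumberField.exists_not_isUnramifiedAt_int
      (𝒪 := 𝓞 (IntermediateField.fixedField H)) hne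
    apply hun
    obtain ⟨Q, hQ, hQP⟩ := Ideal.exists_maximal_ideal_liesOver_of_isIntegral (S := 𝓞 L) P
    obtain ⟨p, hp, hpQ⟩ := exists_p Q
    have := gg H
    have h0 := ne_bot_of_over Q p hp
    have hPu : P = Q.under (𝓞 (IntermediateField.fixedField H)) := Ideal.over_def Q P
    have h1 := Ideal.card_inertia_eq_ramificationIdxIn (G := H) P Q
    rw [Ideal.ramificationIdxIn_eq_ramificationIdx P Q H] at h1
    have h2 : Nat.card (Q.inertia H) = Nat.card (Q.inertia Gal(L/ℚ)) := by
      apply Nat.card_congr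
      exact ⟨fun s => ⟨s.1.1, s.2⟩, fun s => ⟨⟨s.1, hH Q s.2⟩, s.2⟩, fun _ => rfl, fun _ => rfl⟩
    have h3 : Q.ramificationIdx ℤ = P.ramificationIdx ℤ * Q.ramificationIdx (𝓞 (IntermediateField.fixedField H)) := by
      rw [hPu]; exact Ideal.ramificationIdx_tower _ _
    rw [← h1, h2, card_inertia Q p hp] at h3
    have h4 : 0 < Q.ramificationIdx ℤ := by rw [← card_inertia Q p hp]; exact Nat.card_pos
    have h5 : P.ramificationIdx ℤ = 1 := by
      have : P.ramificationIdx ℤ * Q.ramificationIdx ℤ = 1 * Q.ramificationIdx ℤ := by omega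
      exact Nat.eq_of_mul_eq_mul_right h4 this
    have : Finite (ℤ ⧸ P.under ℤ) := by
      obtain ⟨q, hq, hqP⟩ := exists_p P
      rw [← Ideal.over_def P (Ideal.span {(q : ℤ)})]
      have := Fact.mk hq
      exact Finite.of_equiv _ (Int.quotientSpanNatEquivZMod q).symm.toEquiv
    exact Ideal.ramificationIdx_eq_one_iff.mp h5
  have h3 := Module.finrank_mul_finrank ℚ (IntermediateField.fixedField H) L
  rw [IntermediateField.finrank_fixedField_eq_card, h1, one_mul] at h3
  apply Subgroup.eq_top_of_card_eq
  rw [h3, IsGalois.card_aut_eq_finrank]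

lemma card_sup {G : Type*} [Group G] [Finite G] (hab : ∀ σ τ : G, σ * τ = τ * σ) (S : Finset ℕ)
    (I : ℕ → Subgroup G) : Nat.card (S.sup I : Subgroup G) ≤ ∏ p ∈ S, Nat.card (I p) := by
  classical
  induction S using Finset.induction_on with
  | empty => simp
  | insert a s ha ih =>
    rw [Finset.sup_insert, Finset.prod_insert ha]
    have hn : (s.sup I).Normal := ⟨fun n hn g => by rw [hab g n, mul_assoc, mul_inv_cancel, mul_one]; exact hn⟩
    refine le_trans ?_ (Nat.mul_le_mul_left _ ih)
    have h := Subgroup.mul_normal (I a) (s.sup I)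
    have h2 : Nat.card (I a ⊔ s.sup I : Subgroup G) = Nat.card ((I a : Set G) * ((s.sup I : Subgroup G) : Set G) : Set G) := by
      rw [← h]; rfl
    rw [h2]
    exact Set.natCard_mul_le

lemma main (L : Type u) [Field L] [NumberField L] [IsGalois ℚ L]
    (hab : ∀ σ τ : Gal(L/ℚ), σ * τ = τ * σ) :
    Module.finrank ℚ L ^ Module.finrank ℚ L ≤ (discr L).natAbs ^ 4 := by
  have h0 : (discr L).natAbs ≠ 0 := by simpa using discr_ne_zero L
  have hex : ∀ p : ℕ, ∃ P : Ideal (𝓞 L), p.Prime → P.IsMaximal ∧ P.LiesOver (Ideal.span {(p : ℤ)}) := by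
    intro p
    by_cases hp : p.Prime
    · have := span_max p hp
      obtain ⟨P, h1, h2⟩ := Ideal.exists_maximal_ideal_liesOver_of_isIntegral (S := 𝓞 L) (Ideal.span {(p : ℤ)})
      exact ⟨P, fun _ => ⟨h1, h2⟩⟩
    · exact ⟨⊥, fun h => absurd h hp⟩
  choose P hP using hex
  set S := (discr L).natAbs.primeFactors with hS
  have htop : S.sup (fun p => (P p).inertia Gal(L/ℚ)) = ⊤ := by
    apply no_unram
    intro Q hQ
    obtain ⟨p, hp, hpQ⟩ := exists_p Q
    by_cases hpS : p ∈ S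
    · obtain ⟨h1, h2⟩ := hP p hp
      rw [← inertia_eq hab (P p) Q p hp]
      exact Finset.le_sup (f := fun p => (P p).inertia Gal(L/ℚ)) hpS
    · have hk := key L hab Q p hp
      have hz : padicValNat p (discr L).natAbs = 0 := by
        apply padicValNat.eq_zero_of_not_dvd
        intro hd
        exact hpS (Nat.mem_primeFactors.mpr ⟨hp, hd, h0⟩)
      rw [hz, mul_zero, pow_zero] at hk
      have hn : Module.finrank ℚ L ≠ 0 := Module.finrank_pos.ne'
      have h1 : Nat.card (Q.inertia Gal(L/ℚ)) ≤ 1 := by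
        by_contra hc
        exact absurd hk (not_le.mpr (Nat.one_lt_pow hn (by omega)))
      rw [Subgroup.eq_bot_of_card_le _ h1]
      exact bot_le
  have hc := card_sup hab S (fun p => (P p).inertia Gal(L/ℚ))
  rw [htop, Subgroup.card_top, IsGalois.card_aut_eq_finrank] at hc
  calc _ ≤ (∏ p ∈ S, Nat.card ((P p).inertia Gal(L/ℚ))) ^ Module.finrank ℚ L := Nat.pow_le_pow_left hc _
    _ = ∏ p ∈ S, Nat.card ((P p).inertia Gal(L/ℚ)) ^ Module.finrank ℚ L := by rw [Finset.prod_pow]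
    _ ≤ ∏ p ∈ S, p ^ (4 * padicValNat p (discr L).natAbs) := by
      apply Finset.prod_le_prod'
      intro p hpS
      have hp := Nat.prime_of_mem_primeFactors hpS
      obtain ⟨h1, h2⟩ := hP p hp
      exact key L hab (P p) p hp
    _ = (∏ p ∈ S, p ^ padicValNat p (discr L).natAbs) ^ 4 := by
      rw [← Finset.prod_pow]
      apply Finset.prod_congr rfl
      intro p _
      rw [← pow_mul, mul_comm]
    _ = _ := by
      congr 1
      conv_rhs => rw [← Nat.prod_factorization_pow_eq_self h0]
      rw [Finsupp.prod, Nat.support_factorization]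
      apply Finset.prod_congr rfl
      intro p hpS
      rw [Nat.factorization_def _ (Nat.prime_of_mem_primeFactors hpS)]

end M
end Ab

theorem stmt_13 (L : Type*) [Field L] [NumberField L] [IsGalois ℚ L]
    (habelian : ∀ σ τ : L ≃ₐ[ℚ] L, σ * τ = τ * σ)
    (M : ℕ) (hM : 1 < M) (hdeg : Module.finrank ℚ L = 2 * M ^ 2) :
    Real.exp ((1 / 4) * Real.log ((Module.finrank ℚ L : ℝ) / 2)) <
      (|(discr L : ℝ)|) ^ ((Module.finrank ℚ L : ℝ)⁻¹) := by
  have h := Ab.main L habelian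
  have hn : 0 < Module.finrank ℚ L := Module.finrank_pos
  generalize Module.finrank ℚ L = n at *
  have hd : |(discr L : ℝ)| = ((discr L).natAbs : ℝ) := by
    rw [Nat.cast_natAbs]; push_cast; rfl
  have hdp : 0 < |(discr L : ℝ)| := abs_pos.mpr (by exact_mod_cast discr_ne_zero L)
  have h' : (n : ℝ) ^ n ≤ |(discr L : ℝ)| ^ 4 := by rw [hd]; exact_mod_cast h
  have hnR : (0 : ℝ) < n := by exact_mod_cast hn
  have h2 := Real.log_le_log (by positivity) h'
  rw [Real.log_pow, Real.log_pow] at h2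
  rw [Real.rpow_def_of_pos hdp]
  apply Real.exp_lt_exp.mpr
  have h3 : Real.log ((n : ℝ) / 2) < Real.log n := Real.log_lt_log (by positivity) (by linarith)
  have h4 := mul_lt_mul_of_pos_left h3 hnR
  rw [← div_eq_mul_inv, lt_div_iff₀ hnR]
  push_cast at h2
  nlinarith
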